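/- arXiv:2306.14075 — 8 statements merged into one kernel-verified Lean document; each statement's English description precedes it below -/
import Mathlib

section
/- Let R be a nonempty finite relation over an attribute set X, let P be a probability distribution on the tuples of R, and let h : 2^X → ℝ be the entropic vector of the jointly distributed attribute variables under P (so h(W) is the Shannon entropy of the marginal of P on the attributes W). Then for all subsets U, V ⊆ X and every p ∈ (0, ∞] (with the convention 1/∞ = 0): (1/p)·h(U) + h(V|U) ≤ log₂ ||deg_R(V|U)||_p. -/
open scoped BigOperators ENNReal

namespace JoinBounds

noncomputable section

variable {A α : Type*}

/-- The projection of a tuple `t : A → α` onto the attribute set `U`, represented as a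
partial tuple. -/
def proj [DecidableEq A] (U : Finset A) (t : A → α) : A → Option α :=
  fun x => if x ∈ U then some (t x) else none

/-- The projection of a relation `R` onto the attribute set `U`. -/
def projR [Fintype A] [DecidableEq A] [DecidableEq α] (U : Finset A) (R : Finset (A → α)) :
    Finset (A → Option α) :=
  R.image (proj U)

/-- The degree of a `U`-tuple `u` in `R`: the number of distinct `V`-tuples
appearing in `R` together with `u`. -/
def deg [Fintype A] [DecidableEq A] [DecidableEq α] (U V : Finset A) (R : Finset (A → α))
    (u : A → Option α) : ℕ :=
  (projR V (R.filter fun t => proj U t = u)).card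

/-- The `ℓ_p`-norm of the degree sequence `deg_R(V|U)`, for `p ∈ (0, ∞]`. -/
def lpNorm [Fintype A] [DecidableEq A] [DecidableEq α] (U V : Finset A) (R : Finset (A → α))
    (p : ℝ≥0∞) : ℝ :=
  if p = ⊤ then (((projR U R).sup fun u => deg U V R u : ℕ) : ℝ)
  else (∑ u ∈ projR U R, (deg U V R u : ℝ) ^ p.toReal) ^ (1 / p.toReal)

/-- The marginal probability, on the attribute set `W`, of the partial tuple `w`, under a
probability distribution `P` on the tuples of `R`. -/
def marg [Fintype A] [DecidableEq A] [DecidableEq α] (P : (A → α) → ℝ) (R : Finset (A → α))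
    (W : Finset A) (w : A → Option α) : ℝ :=
  ∑ t ∈ R.filter fun t => proj W t = w, P t

/-- The (base-2 Shannon) entropy of the marginal on the attribute set `W` of the
distribution `P` on the tuples of `R`: this is the entropic vector `h(W)`. -/
def entropy [Fintype A] [DecidableEq A] [DecidableEq α] (P : (A → α) → ℝ) (R : Finset (A → α))
    (W : Finset A) : ℝ :=
  -∑ w ∈ projR W R, marg P R W w * Real.logb 2 (marg P R W w)

end

end JoinBounds

namespace JoinBounds

section helpers

variable {A α : Type*} [Fintype A] [DecidableEq A] [DecidableEq α]

lemma gibbs_aux {x y : ℝ} (hx : 0 ≤ x) (hy : 0 ≤ y) (h : y = 0 → x = 0) :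
    x * Real.log y - x * Real.log x ≤ y - x := by
  rcases hx.eq_or_lt with rfl | hx
  · simpa using hy
  · have hy' : 0 < y := lt_of_le_of_ne hy (fun e => hx.ne' (h e.symm))
    have h1 := Real.log_le_sub_one_of_pos (div_pos hy' hx)
    rw [Real.log_div hy'.ne' hx.ne'] at h1
    have h2 := mul_le_mul_of_nonneg_left h1 hx.le
    have h3 : x * (y / x - 1) = y - x := by field_simp
    linarith

lemma sum_marg (P : (A → α) → ℝ) (R : Finset (A → α)) (W : Finset A)
    (F : (A → Option α) → ℝ) :
    ∑ w ∈ projR W R, marg P R W w * F w = ∑ t ∈ R, P t * F (proj W t) := by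
  rw [← Finset.sum_fiberwise_of_maps_to (t := projR W R) (g := proj W)
    (fun t ht => Finset.mem_image_of_mem _ ht)]
  refine Finset.sum_congr rfl fun w _ => ?_
  rw [marg, Finset.sum_mul]
  refine Finset.sum_congr rfl fun t ht => ?_
  rw [(Finset.mem_filter.1 ht).2]

/-- restriction of a partial tuple -/
def restr (U : Finset A) (w : A → Option α) : A → Option α :=
  fun x => if x ∈ U then w x else none

lemma restr_left (U V : Finset A) (t : A → α) :
    restr U (proj (U ∪ V) t) = proj U t := by
  funext x
  by_cases h : x ∈ U <;> simp [restr, proj, h]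

lemma restr_right (U V : Finset A) (t : A → α) :
    restr V (proj (U ∪ V) t) = proj V t := by
  funext x
  by_cases h : x ∈ V <;> simp [restr, proj, h]

lemma proj_union_eq {U V : Finset A} {t s : A → α} (h1 : proj U t = proj U s)
    (h2 : proj V t = proj V s) : proj (U ∪ V) t = proj (U ∪ V) s := by
  funext x
  have a := congrFun h1 x
  have b := congrFun h2 x
  by_cases hU : x ∈ U <;> by_cases hV : x ∈ V <;> simp_all [proj]

lemma deg_eq (U V : Finset A) (R : Finset (A → α)) (u : A → Option α) :
    deg U V R u = ((projR (U ∪ V) R).filter fun w => restr U w = u).card := by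
  have e1 : ((projR (U ∪ V) R).filter fun w => restr U w = u)
      = (R.filter fun t => proj U t = u).image (proj (U ∪ V)) := by
    rw [projR, Finset.filter_image]
    simp only [restr_left]
  have e2 : projR V (R.filter fun t => proj U t = u)
      = ((R.filter fun t => proj U t = u).image (proj (U ∪ V))).image (restr V) := by
    rw [projR, Finset.image_image]
    refine Finset.image_congr fun t _ => ?_
    simp [restr_right]
  rw [e1, deg, e2, Finset.card_image_of_injOn]
  intro w hw w' hw' hww
  simp only [Finset.coe_image, Finset.coe_filter, Set.mem_image, Set.mem_setOf_eq] at hw hw'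
  obtain ⟨t, ⟨_, ht⟩, rfl⟩ := hw
  obtain ⟨s, ⟨_, hs⟩, rfl⟩ := hw'
  simp only [restr_right] at hww
  exact proj_union_eq (ht.trans hs.symm) hww

lemma deg_pos {U V : Finset A} {R : Finset (A → α)} {u : A → Option α}
    (hu : u ∈ projR U R) : 0 < deg U V R u := by
  obtain ⟨t, ht, rfl⟩ := Finset.mem_image.1 hu
  exact Finset.card_pos.2 ⟨proj V t,
    Finset.mem_image_of_mem _ (Finset.mem_filter.2 ⟨ht, rfl⟩)⟩

lemma marg_nonneg {P : (A → α) → ℝ} {R : Finset (A → α)} (hP0 : ∀ t ∈ R, 0 ≤ P t)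
    (W : Finset A) (w : A → Option α) : 0 ≤ marg P R W w :=
  Finset.sum_nonneg fun t ht => hP0 t (Finset.mem_filter.1 ht).1

lemma marg_le {P : (A → α) → ℝ} {R : Finset (A → α)} (hP0 : ∀ t ∈ R, 0 ≤ P t)
    (U V : Finset A) (w : A → Option α) :
    marg P R (U ∪ V) w ≤ marg P R U (restr U w) := by
  refine Finset.sum_le_sum_of_subset_of_nonneg ?_ fun t ht _ => hP0 t (Finset.mem_filter.1 ht).1
  intro t ht
  rw [Finset.mem_filter] at ht ⊢
  exact ⟨ht.1, by rw [← ht.2, restr_left]⟩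

lemma sum_marg_one {P : (A → α) → ℝ} {R : Finset (A → α)} (hP1 : ∑ t ∈ R, P t = 1)
    (W : Finset A) : ∑ w ∈ projR W R, marg P R W w = 1 := by
  simpa [hP1] using sum_marg P R W (fun _ => 1)

lemma entropy_mul (P : (A → α) → ℝ) (R : Finset (A → α)) (W : Finset A) :
    entropy P R W = -(∑ w ∈ projR W R, marg P R W w * Real.log (marg P R W w)) / Real.log 2 := by
  rw [entropy, neg_div, Finset.sum_div]
  simp only [Real.logb, mul_div_assoc]

lemma cond_bound {P : (A → α) → ℝ} {R : Finset (A → α)} (hP0 : ∀ t ∈ R, 0 ≤ P t)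
    (hP1 : ∑ t ∈ R, P t = 1) (U V : Finset A) :
    -(∑ w ∈ projR (U ∪ V) R, marg P R (U ∪ V) w * Real.log (marg P R (U ∪ V) w))
      + (∑ u ∈ projR U R, marg P R U u * Real.log (marg P R U u))
      ≤ ∑ u ∈ projR U R, marg P R U u * Real.log (deg U V R u) := by
  have hmem : ∀ w ∈ projR (U ∪ V) R, restr U w ∈ projR U R := by
    intro w hw
    obtain ⟨t, ht, rfl⟩ := Finset.mem_image.1 hw
    rw [restr_left]
    exact Finset.mem_image_of_mem _ ht
  have key : ∀ w ∈ projR (U ∪ V) R,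
      marg P R (U ∪ V) w * (Real.log (marg P R U (restr U w)) - Real.log (deg U V R (restr U w)))
        - marg P R (U ∪ V) w * Real.log (marg P R (U ∪ V) w)
      ≤ marg P R U (restr U w) / deg U V R (restr U w) - marg P R (U ∪ V) w := by
    intro w hw
    have hd : (0 : ℝ) < deg U V R (restr U w) := by exact_mod_cast deg_pos (hmem w hw)
    have hb := marg_nonneg hP0 U (restr U w)
    have ha := marg_nonneg hP0 (U ∪ V) w
    have hab := marg_le hP0 U V w
    rcases hb.eq_or_lt with h0 | h0
    · have : marg P R (U ∪ V) w = 0 := by linarith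
      simp [this, ← h0]
    · rw [← Real.log_div h0.ne' hd.ne']
      exact gibbs_aux ha (by positivity) (fun h => absurd h (div_pos h0 hd).ne')
  have hs := Finset.sum_le_sum key
  rw [Finset.sum_sub_distrib, Finset.sum_sub_distrib, sum_marg_one hP1,
    sum_marg P R (U ∪ V) (fun w => Real.log (marg P R U (restr U w))
      - Real.log (deg U V R (restr U w)))] at hs
  simp only [restr_left] at hs
  rw [← sum_marg P R U (fun u => Real.log (marg P R U u) - Real.log (deg U V R u))] at hs
  have h1 : ∑ w ∈ projR (U ∪ V) R, marg P R U (restr U w) / deg U V R (restr U w) = 1 := by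
    rw [← sum_marg_one hP1 U, ← Finset.sum_fiberwise_of_maps_to hmem]
    refine Finset.sum_congr rfl fun u hu => ?_
    have hd : (0 : ℝ) < deg U V R u := by exact_mod_cast deg_pos hu
    rw [Finset.sum_congr rfl (g := fun _ => marg P R U u / deg U V R u)
      (fun w hw => by rw [(Finset.mem_filter.1 hw).2]), Finset.sum_const, ← deg_eq, nsmul_eq_mul]
    field_simp
  simp only [mul_sub, Finset.sum_sub_distrib] at hs
  rw [h1] at hs
  linarith

lemma gibbs {ι : Type*} (s : Finset ι) (b c : ι → ℝ) (hb : ∀ i ∈ s, 0 ≤ b i)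
    (hb1 : ∑ i ∈ s, b i = 1) (hc : ∀ i ∈ s, 0 < c i) :
    ∑ i ∈ s, b i * Real.log (c i) - ∑ i ∈ s, b i * Real.log (b i)
      ≤ Real.log (∑ i ∈ s, c i) := by
  have hne : s.Nonempty := by
    rw [Finset.nonempty_iff_ne_empty]
    rintro rfl
    simp at hb1
  have hS : 0 < ∑ i ∈ s, c i := Finset.sum_pos hc hne
  have key : ∀ i ∈ s, b i * (Real.log (c i) - Real.log (∑ i ∈ s, c i)) - b i * Real.log (b i)
      ≤ c i / (∑ i ∈ s, c i) - b i := by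
    intro i hi
    rw [← Real.log_div (hc i hi).ne' hS.ne']
    have := div_pos (hc i hi) hS
    exact gibbs_aux (hb i hi) this.le (fun h => absurd h this.ne')
  have hs := Finset.sum_le_sum key
  simp only [mul_sub, Finset.sum_sub_distrib] at hs
  rw [← Finset.sum_mul, ← Finset.sum_div, div_self hS.ne', hb1] at hs
  linarith

end helpers

/-- For a nonempty finite relation `R`, a probability distribution `P` on the
tuples of `R` with entropic vector `h = entropy P R ·`, all attribute sets `U, V` and all
`p ∈ (0, ∞]` we have `(1/p)·h(U) + h(V|U) ≤ log₂ ‖deg_R(V|U)‖_p`. -/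
theorem lp_degree_entropy_bound {A α : Type*} [Fintype A] [DecidableEq A] [DecidableEq α]
    (R : Finset (A → α)) (hR : R.Nonempty)
    (P : (A → α) → ℝ) (hP0 : ∀ t ∈ R, 0 ≤ P t) (hP1 : ∑ t ∈ R, P t = 1)
    (U V : Finset A) (p : ℝ≥0∞) (hp : 0 < p) :
    (1 / p).toReal * entropy P R U + (entropy P R (U ∪ V) - entropy P R U)
      ≤ Real.logb 2 (lpNorm U V R p) := by
  have hl : 0 < Real.log 2 := Real.log_pos (by norm_num)
  have hc := cond_bound hP0 hP1 U V
  have hdp : ∀ u ∈ projR U R, (0 : ℝ) < deg U V R u := fun u hu => by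
    exact_mod_cast deg_pos hu
  have hb1 := sum_marg_one hP1 U
  rw [entropy_mul, entropy_mul, Real.logb, ← mul_div_assoc, ← sub_div, ← add_div]
  refine div_le_div_of_nonneg_right ?_ hl.le
  by_cases hpt : p = ⊤
  · subst hpt
    have h2 : ∑ u ∈ projR U R, marg P R U u * Real.log (deg U V R u)
        ≤ Real.log (lpNorm U V R ⊤) := by
      rw [← one_mul (Real.log (lpNorm U V R ⊤)), ← hb1, Finset.sum_mul]
      refine Finset.sum_le_sum fun u hu => mul_le_mul_of_nonneg_left ?_ (marg_nonneg hP0 U u)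
      refine Real.log_le_log (hdp u hu) ?_
      rw [lpNorm, if_pos rfl]
      exact_mod_cast Finset.le_sup (f := fun u => deg U V R u) hu
    simp only [one_div, ENNReal.inv_top, ENNReal.toReal_zero, zero_mul]
    linarith
  · have hq : 0 < p.toReal := ENNReal.toReal_pos hp.ne' hpt
    have hg := gibbs (projR U R) (marg P R U) (fun u => (deg U V R u : ℝ) ^ p.toReal)
      (fun u _ => marg_nonneg hP0 U u) hb1 (fun u hu => Real.rpow_pos_of_pos (hdp u hu) _)
    have e : ∑ u ∈ projR U R, marg P R U u * Real.log ((deg U V R u : ℝ) ^ p.toReal)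
        = p.toReal * ∑ u ∈ projR U R, marg P R U u * Real.log (deg U V R u) := by
      rw [Finset.mul_sum]
      refine Finset.sum_congr rfl fun u hu => ?_
      rw [Real.log_rpow (hdp u hu)]
      ring
    have hS : 0 < ∑ u ∈ projR U R, (deg U V R u : ℝ) ^ p.toReal :=
      Finset.sum_pos (fun u hu => Real.rpow_pos_of_pos (hdp u hu) _) (hR.image _)
    rw [e] at hg
    rw [lpNorm, if_neg hpt, Real.log_rpow hS, one_div, ENNReal.toReal_inv, one_div]
    have h3 := mul_le_mul_of_nonneg_left hg (inv_pos.2 hq).le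
    rw [mul_sub, inv_mul_cancel_left₀ hq.ne'] at h3
    linarith

end JoinBounds
end

section
/- Let Q(X) = ⋀_{j∈[m]} R_j(Y_j) be a full conjunctive query. For i ∈ [s] let U_i, V_i ⊆ X, let w_i ≥ 0 be reals, let p_i ∈ (0, ∞], and assume each conditional (V_i|U_i) is guarded by some atom R_{j_i} of Q, i.e. U_i ∪ V_i ⊆ Y_{j_i}. Suppose the information inequality ∑_{i∈[s]} w_i·((1/p_i)·h(U_i) + h(V_i|U_i)) ≥ h(X) (with 1/∞ = 0) holds for every entropic vector h on the variables X. Then for every database instance D = (R_1^D, …, R_m^D) of finite relations, the output size satisfies |Q(D)| ≤ ∏_{i∈[s]} ||deg_{R_{j_i}^D}(V_i|U_i)||_{p_i}^{w_i}. -/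
open scoped BigOperators ENNReal

namespace JoinBounds

theorem proj_eq_iff {A α : Type*} [DecidableEq A] (W : Finset A) (t t' : A → α) :
    proj W t = proj W t' ↔ ∀ x ∈ W, t x = t' x := by
  constructor
  · intro h x hx
    have := congrFun h x
    simpa [proj, hx] using this
  · intro h
    funext x
    by_cases hx : x ∈ W
    · simp [proj, hx, h x hx]
    · simp [proj, hx]

/-- number of tuples of `Q` with the same `W`-projection as `t` -/
noncomputable def ct {A α : Type*} [DecidableEq A] [Fintype A] [DecidableEq α]
    (Q : Finset (A → α)) (W : Finset A) (t : A → α) : ℕ :=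
  (Q.filter fun t' => proj W t' = proj W t).card

theorem ct_pos {A α : Type*} [DecidableEq A] [Fintype A] [DecidableEq α]
    (Q : Finset (A → α)) (W : Finset A) (t : A → α) (ht : t ∈ Q) : 0 < ct Q W t := by
  unfold ct
  exact Finset.card_pos.mpr ⟨t, by simp [ht]⟩

/-- entropy of the uniform distribution on `Q` -/
noncomputable def HH {A α : Type*} [DecidableEq A] [Fintype A] [DecidableEq α]
    (Q : Finset (A → α)) (W : Finset A) : ℝ :=
  -∑ t ∈ Q, (1 / (Q.card : ℝ)) * Real.logb 2 ((ct Q W t : ℝ) / Q.card)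

theorem entropy_eq {A α : Type*} [DecidableEq A] [Fintype A] [DecidableEq α]
    (P : (A → α) → ℝ) (R : Finset (A → α)) (W : Finset A) :
    entropy P R W = -∑ t ∈ R, P t * Real.logb 2 (marg P R W (proj W t)) := by
  unfold entropy
  congr 1
  rw [← Finset.sum_fiberwise_of_maps_to (s := R) (t := projR W R) (g := proj W)
    (fun t ht => Finset.mem_image_of_mem _ ht)]
  apply Finset.sum_congr rfl
  intro y _
  conv_lhs => rw [marg, Finset.sum_mul]
  apply Finset.sum_congr rfl
  intro t ht
  rw [(Finset.mem_filter.mp ht).2, marg]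

theorem entropy_transport {A α β : Type*} [DecidableEq A] [Fintype A] [DecidableEq α]
    [DecidableEq β] [Fintype β] (Q : Finset (A → α)) (e : α → β)
    (he : ∀ t ∈ Q, ∀ t' ∈ Q, ∀ x, e (t x) = e (t' x) → t x = t' x) (W : Finset A) :
    entropy (fun t => if t ∈ Q.image (fun t => e ∘ t) then 1 / (Q.card : ℝ) else 0)
      Finset.univ W = HH Q W := by
  have hinj : Set.InjOn (fun t : A → α => e ∘ t) Q := by
    intro t ht t' ht' h
    funext x
    exact he t ht t' ht' x (congrFun h x)
  have hproj : ∀ t ∈ Q, ∀ t' ∈ Q, (proj W (e ∘ t) = proj W (e ∘ t') ↔ proj W t = proj W t') := by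
    intro t ht t' ht'
    rw [proj_eq_iff, proj_eq_iff]
    constructor
    · intro h x hx
      exact he t ht t' ht' x (h x hx)
    · intro h x hx
      simp [h x hx]
  rw [entropy_eq, HH]
  congr 1
  simp only [ite_mul, zero_mul]
  rw [← Finset.sum_filter, Finset.filter_mem_eq_inter, Finset.univ_inter,
    Finset.sum_image hinj]
  apply Finset.sum_congr rfl
  intro t ht
  congr 2
  unfold marg
  rw [← Finset.sum_filter, Finset.filter_filter]
  have : (Finset.univ.filter fun t' : A → β => proj W t' = proj W (e ∘ t) ∧
      t' ∈ Q.image (fun t => e ∘ t)) =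
      (Q.filter fun t' => proj W t' = proj W t).image (fun t => e ∘ t) := by
    ext t'
    simp only [Finset.mem_filter, Finset.mem_univ, true_and, Finset.mem_image]
    constructor
    · rintro ⟨h, t0, h0, rfl⟩
      exact ⟨t0, ⟨h0, (hproj _ h0 _ ht).1 h⟩, rfl⟩
    · rintro ⟨t0, ⟨h0, h⟩, rfl⟩
      exact ⟨(hproj _ h0 _ ht).2 h, t0, h0, rfl⟩
  rw [this, Finset.sum_const, Finset.card_image_of_injOn
    (hinj.mono (by intro x hx; exact (Finset.mem_filter.mp hx).1)), ct, nsmul_eq_mul]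
  ring

theorem sum_logb_nonpos {ι : Type*} (Q : Finset ι) (x : ι → ℝ) (hx : ∀ t ∈ Q, 0 < x t)
    (hs : ∑ t ∈ Q, x t ≤ Q.card) : ∑ t ∈ Q, Real.logb 2 (x t) ≤ 0 := by
  have h1 : ∑ t ∈ Q, Real.log (x t) ≤ ∑ t ∈ Q, (x t - 1) :=
    Finset.sum_le_sum fun t ht => Real.log_le_sub_one_of_pos (hx t ht)
  rw [Finset.sum_sub_distrib] at h1
  simp only [Finset.sum_const, nsmul_eq_mul, mul_one] at h1
  simp only [Real.logb]
  rw [← Finset.sum_div]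
  exact div_nonpos_of_nonpos_of_nonneg (by linarith) (Real.log_nonneg (by norm_num))

theorem sum_fiber {ι κ : Type*} [DecidableEq κ] (Q : Finset ι) (f : ι → κ) (F : κ → ℝ) :
    ∑ t ∈ Q, F (f t) / ((Q.filter fun t' => f t' = f t).card : ℝ) = ∑ y ∈ Q.image f, F y := by
  rw [← Finset.sum_fiberwise_of_maps_to (s := Q) (t := Q.image f) (g := f)
    (fun t ht => Finset.mem_image_of_mem _ ht)]
  apply Finset.sum_congr rfl
  intro y hy
  have : ∀ t ∈ Q.filter (fun t => f t = y),
      F (f t) / ((Q.filter fun t' => f t' = f t).card : ℝ) =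
      F y / ((Q.filter fun t' => f t' = y).card : ℝ) := by
    intro t ht
    rw [(Finset.mem_filter.mp ht).2]
  rw [Finset.sum_congr rfl this, Finset.sum_const, nsmul_eq_mul]
  obtain ⟨t, ht, rfl⟩ := Finset.mem_image.mp hy
  have : ((Q.filter fun t' => f t' = f t).card : ℝ) ≠ 0 := by
    have : 0 < (Q.filter fun t' => f t' = f t).card := Finset.card_pos.mpr ⟨t, by simp [ht]⟩
    positivity
  field_simp

section key
variable {A α : Type*} [DecidableEq A] [Fintype A] [DecidableEq α]

theorem projR_subset (Q R : Finset (A → α)) (Y U : Finset A) (hU : U ⊆ Y)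
    (hQR : ∀ t ∈ Q, ∃ t' ∈ R, ∀ x ∈ Y, t x = t' x) : projR U Q ⊆ projR U R := by
  intro u hu
  obtain ⟨t, ht, rfl⟩ := Finset.mem_image.mp hu
  obtain ⟨t', ht', h⟩ := hQR t ht
  exact Finset.mem_image.mpr ⟨t', ht', ((proj_eq_iff _ _ _).2 fun x hx => h x (hU hx)).symm⟩

theorem deg_le (Q R : Finset (A → α)) (Y U V : Finset A) (hUV : U ∪ V ⊆ Y)
    (hQR : ∀ t ∈ Q, ∃ t' ∈ R, ∀ x ∈ Y, t x = t' x) (u : A → Option α) :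
    deg U V Q u ≤ deg U V R u := by
  unfold deg
  apply Finset.card_le_card
  apply projR_subset _ _ Y V (Finset.subset_union_right.trans hUV)
  intro t ht
  obtain ⟨ht, h1⟩ := Finset.mem_filter.mp ht
  obtain ⟨t', ht', h⟩ := hQR t ht
  refine ⟨t', Finset.mem_filter.mpr ⟨ht', ?_⟩, h⟩
  rw [← h1]
  exact ((proj_eq_iff _ _ _).2 fun x hx => h x (hUV (Finset.mem_union_left _ hx))).symm

theorem deg_pos_s1 (Q : Finset (A → α)) (U V : Finset A) (t : A → α) (ht : t ∈ Q) :
    0 < deg U V Q (proj U t) := by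
  unfold deg
  exact Finset.card_pos.mpr ⟨proj V t, Finset.mem_image_of_mem _ (by simp [ht])⟩

theorem proj_union (U V : Finset A) (t t' : A → α) :
    proj (U ∪ V) t = proj (U ∪ V) t' ↔ proj U t = proj U t' ∧ proj V t = proj V t' := by
  simp only [proj_eq_iff, Finset.mem_union]
  grind

/-- Step A -/
theorem stepA (Q : Finset (A → α)) (U V : Finset A) (d : (A → Option α) → ℝ)
    (hd : ∀ t ∈ Q, (deg U V Q (proj U t) : ℝ) ≤ d (proj U t)) :
    HH Q (U ∪ V) - HH Q U ≤ (1 / (Q.card : ℝ)) * ∑ t ∈ Q, Real.logb 2 (d (proj U t)) := by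
  have hdp : ∀ t ∈ Q, 0 < d (proj U t) := fun t ht =>
    lt_of_lt_of_le (by exact_mod_cast deg_pos_s1 Q U V t ht) (hd t ht)
  have hc : ∀ W, ∀ t ∈ Q, (0 : ℝ) < ct Q W t := fun W t ht => by
    exact_mod_cast ct_pos Q W t ht
  have key : ∑ t ∈ Q, Real.logb 2 (ct Q U t / (ct Q (U ∪ V) t * d (proj U t))) ≤ 0 := by
    apply sum_logb_nonpos
    · intro t ht
      have := hdp t ht
      have := hc U t ht
      have := hc (U ∪ V) t ht
      positivity
    · rw [← Finset.sum_fiberwise_of_maps_to (s := Q) (t := Q.image (proj U)) (g := proj U)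
        (fun t ht => Finset.mem_image_of_mem _ ht)]
      rw [Finset.card_eq_sum_card_image (proj U) Q]
      push_cast
      apply Finset.sum_le_sum
      intro u hu
      set Qu := Q.filter (fun t => proj U t = u) with hQu
      have h1 : ∀ t ∈ Qu, (ct Q U t : ℝ) / (ct Q (U ∪ V) t * d (proj U t)) =
          (Qu.card / d u) * ((fun _ => (1 : ℝ)) (proj V t) /
            ((Qu.filter fun t' => proj V t' = proj V t).card : ℝ)) := by
        intro t ht
        have htu := (Finset.mem_filter.mp ht).2
        have e1 : ct Q U t = Qu.card := by rw [ct, htu]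
        have e2 : ct Q (U ∪ V) t = (Qu.filter fun t' => proj V t' = proj V t).card := by
          rw [ct, hQu, Finset.filter_filter]
          congr 1
          apply Finset.filter_congr
          intro t' _
          rw [proj_union, htu]
        rw [e1, e2, htu]
        simp only [div_eq_mul_inv, mul_inv]
        ring
      rw [Finset.sum_congr rfl h1, ← Finset.mul_sum, sum_fiber Qu (proj V) (fun _ => 1)]
      obtain ⟨t, ht, rfl⟩ := Finset.mem_image.mp hu
      have h2 : ∑ y ∈ Qu.image (proj V), (1 : ℝ) = deg U V Q (proj U t) := by
        simp [deg, projR, hQu]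
      rw [h2, div_mul_eq_mul_div, div_le_iff₀ (hdp t ht)]
      exact mul_le_mul_of_nonneg_left (hd t ht) (by positivity)
  have hexp : ∀ t ∈ Q, Real.logb 2 (ct Q U t / (ct Q (U ∪ V) t * d (proj U t))) =
      Real.logb 2 ((ct Q U t : ℝ) / Q.card) - Real.logb 2 ((ct Q (U ∪ V) t : ℝ) / Q.card)
        - Real.logb 2 (d (proj U t)) := by
    intro t ht
    have h0 := hdp t ht
    have h1 := hc U t ht
    have h2 := hc (U ∪ V) t ht
    have h3 : (0 : ℝ) < Q.card := by exact_mod_cast Finset.card_pos.mpr ⟨t, ht⟩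
    rw [Real.logb_div h1.ne' (by positivity), Real.logb_mul h2.ne' h0.ne',
      Real.logb_div h1.ne' h3.ne', Real.logb_div h2.ne' h3.ne']
    ring
  rw [Finset.sum_congr rfl hexp, Finset.sum_sub_distrib, Finset.sum_sub_distrib] at key
  unfold HH
  rw [← Finset.mul_sum, ← Finset.mul_sum]
  have hN : (0 : ℝ) ≤ 1 / (Q.card : ℝ) := by positivity
  nlinarith [mul_le_mul_of_nonneg_left key hN]

/-- Step B -/
theorem stepB (Q : Finset (A → α)) (hQ : Q.Nonempty) (U : Finset A) (g : (A → Option α) → ℝ)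
    (hg : ∀ t ∈ Q, 0 < g (proj U t)) (S : ℝ) (hS : ∑ u ∈ projR U Q, g u ≤ S) :
    HH Q U + (1 / (Q.card : ℝ)) * ∑ t ∈ Q, Real.logb 2 (g (proj U t)) ≤ Real.logb 2 S := by
  have hN : (0 : ℝ) < Q.card := by exact_mod_cast Finset.card_pos.mpr hQ
  have hc : ∀ t ∈ Q, (0 : ℝ) < ct Q U t := fun t ht => by
    exact_mod_cast ct_pos Q U t ht
  have hSp : 0 < S := by
    refine lt_of_lt_of_le (Finset.sum_pos ?_ (hQ.image _)) hS
    intro u hu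
    obtain ⟨t, ht, rfl⟩ := Finset.mem_image.mp hu
    exact hg t ht
  have key : ∑ t ∈ Q, Real.logb 2 ((Q.card / S) * (g (proj U t) / ct Q U t)) ≤ 0 := by
    apply sum_logb_nonpos
    · intro t ht
      have := hg t ht
      have := hc t ht
      positivity
    · rw [← Finset.mul_sum]
      have := sum_fiber Q (proj U) g
      unfold ct
      rw [this, div_mul_eq_mul_div, div_le_iff₀ hSp]
      exact mul_le_mul_of_nonneg_left hS hN.le
  have hexp : ∀ t ∈ Q, Real.logb 2 ((Q.card / S) * (g (proj U t) / ct Q U t)) =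
      Real.logb 2 (g (proj U t)) - Real.logb 2 ((ct Q U t : ℝ) / Q.card) - Real.logb 2 S := by
    intro t ht
    have h1 := hg t ht
    have h2 := hc t ht
    rw [Real.logb_mul (by positivity) (by positivity), Real.logb_div hN.ne' hSp.ne',
      Real.logb_div h1.ne' h2.ne', Real.logb_div h2.ne' hN.ne']
    ring
  rw [Finset.sum_congr rfl hexp, Finset.sum_sub_distrib, Finset.sum_sub_distrib,
    Finset.sum_const, nsmul_eq_mul] at key
  unfold HH
  rw [← Finset.mul_sum]
  have h := mul_le_mul_of_nonneg_left key (by positivity : (0 : ℝ) ≤ 1 / (Q.card : ℝ))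
  have h5 : 1 / (Q.card : ℝ) * (Q.card * Real.logb 2 S) = Real.logb 2 S := by
    field_simp
  rw [mul_sub, mul_sub, h5] at h
  linarith

theorem lpNorm_nonneg (R : Finset (A → α)) (U V : Finset A) (p : ℝ≥0∞) :
    0 ≤ lpNorm U V R p := by
  unfold lpNorm
  split_ifs
  · positivity
  · exact Real.rpow_nonneg (Finset.sum_nonneg fun u _ => by positivity) _

theorem key_bound (Q R : Finset (A → α)) (hQ : Q.Nonempty) (Y U V : Finset A) (hUV : U ∪ V ⊆ Y)
    (hQR : ∀ t ∈ Q, ∃ t' ∈ R, ∀ x ∈ Y, t x = t' x) (p : ℝ≥0∞) (hp : 0 < p) :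
    0 < lpNorm U V R p ∧
    (1 / p).toReal * HH Q U + (HH Q (U ∪ V) - HH Q U) ≤ Real.logb 2 (lpNorm U V R p) := by
  have hU : U ⊆ Y := Finset.subset_union_left.trans hUV
  have hN : (0 : ℝ) < Q.card := by exact_mod_cast Finset.card_pos.mpr hQ
  have hd : ∀ t ∈ Q, (deg U V Q (proj U t) : ℝ) ≤ (deg U V R (proj U t) : ℝ) := fun t _ => by
    exact_mod_cast deg_le Q R Y U V hUV hQR _
  have hdp : ∀ t ∈ Q, (0 : ℝ) < (deg U V R (proj U t) : ℝ) := fun t ht =>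
    lt_of_lt_of_le (by exact_mod_cast deg_pos_s1 Q U V t ht) (hd t ht)
  have hA := stepA Q U V (fun u => (deg U V R u : ℝ)) hd
  have hsub := projR_subset Q R Y U hU hQR
  by_cases hpt : p = ⊤
  · subst hpt
    simp only [lpNorm, if_true]
    set M : ℕ := (projR U R).sup fun u => deg U V R u with hM
    have hle : ∀ t ∈ Q, (deg U V R (proj U t) : ℝ) ≤ M := fun t ht => by
      exact_mod_cast Finset.le_sup (f := fun u => deg U V R u)
        (hsub (Finset.mem_image_of_mem _ ht))
    obtain ⟨t0, ht0⟩ := hQ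
    refine ⟨(hdp t0 ht0).trans_le (hle t0 ht0), ?_⟩
    have h1 : ∑ t ∈ Q, Real.logb 2 (deg U V R (proj U t) : ℝ) ≤ Q.card * Real.logb 2 M := by
      rw [← nsmul_eq_mul]
      apply Finset.sum_le_card_nsmul
      intro t ht
      exact Real.logb_le_logb_of_le (by norm_num) (hdp t ht) (hle t ht)
    have h2 := mul_le_mul_of_nonneg_left h1 (by positivity : (0 : ℝ) ≤ 1 / (Q.card : ℝ))
    have h5 : 1 / (Q.card : ℝ) * (Q.card * Real.logb 2 M) = Real.logb 2 M := by
      field_simp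
    simp only [one_div, ENNReal.inv_top, ENNReal.toReal_zero, zero_mul, zero_add] at *
    linarith
  · have hr : 0 < p.toReal := ENNReal.toReal_pos hp.ne' hpt
    simp only [lpNorm, if_neg hpt]
    set r := p.toReal with hrdef
    set S : ℝ := ∑ u ∈ projR U R, (deg U V R u : ℝ) ^ r with hSdef
    have hS : ∑ u ∈ projR U Q, (deg U V R u : ℝ) ^ r ≤ S :=
      Finset.sum_le_sum_of_subset_of_nonneg hsub fun u _ _ => by positivity
    have hg : ∀ t ∈ Q, 0 < (deg U V R (proj U t) : ℝ) ^ r := fun t ht =>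
      Real.rpow_pos_of_pos (hdp t ht) _
    have hSp : 0 < S := by
      refine lt_of_lt_of_le (Finset.sum_pos ?_ (hQ.image _)) hS
      intro u hu
      obtain ⟨t, ht, rfl⟩ := Finset.mem_image.mp hu
      exact hg t ht
    refine ⟨Real.rpow_pos_of_pos hSp _, ?_⟩
    have hB := stepB Q hQ U (fun u => (deg U V R u : ℝ) ^ r) hg S hS
    have h1 : ∑ t ∈ Q, Real.logb 2 ((deg U V R (proj U t) : ℝ) ^ r) =
        r * ∑ t ∈ Q, Real.logb 2 (deg U V R (proj U t) : ℝ) := by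
      rw [Finset.mul_sum]
      apply Finset.sum_congr rfl
      intro t ht
      rw [Real.logb_rpow_eq_mul_logb_of_pos (hdp t ht)]
    simp only [h1] at hB
    rw [Real.logb_rpow_eq_mul_logb_of_pos hSp]
    have h3 : (1 / p).toReal = 1 / r := by simp [hrdef]
    rw [h3]
    have h4 := mul_le_mul_of_nonneg_left hB (by positivity : 0 ≤ 1 / r)
    have h5 : 1 / r * (HH Q U + 1 / (Q.card : ℝ) *
        (r * ∑ t ∈ Q, Real.logb 2 (deg U V R (proj U t) : ℝ))) = 1 / r * HH Q U +
        1 / (Q.card : ℝ) * ∑ t ∈ Q, Real.logb 2 (deg U V R (proj U t) : ℝ) := by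
      field_simp
    rw [h5] at h4
    linarith

theorem HH_univ (Q : Finset (A → α)) (hQ : Q.Nonempty) :
    HH Q Finset.univ = Real.logb 2 Q.card := by
  have hN : (0 : ℝ) < Q.card := by exact_mod_cast Finset.card_pos.mpr hQ
  unfold HH
  have : ∀ t ∈ Q, (1 / (Q.card : ℝ)) * Real.logb 2 ((ct Q Finset.univ t : ℝ) / Q.card) =
      (1 / (Q.card : ℝ)) * (-Real.logb 2 Q.card) := by
    intro t ht
    have : ct Q Finset.univ t = 1 := by
      rw [ct, Finset.card_eq_one]
      refine ⟨t, ?_⟩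
      ext t'
      simp only [Finset.mem_filter, proj_eq_iff, Finset.mem_singleton]
      constructor
      · exact fun h => funext fun x => h.2 x (Finset.mem_univ x)
      · rintro rfl
        exact ⟨ht, fun _ _ => rfl⟩
    rw [this, Nat.cast_one, one_div, Real.logb_inv]
  rw [Finset.sum_congr rfl this, Finset.sum_const, nsmul_eq_mul]
  field_simp

theorem exists_code (Q : Finset (A → α)) : ∃ (n : ℕ) (e : α → Fin n ⊕ Unit),
    ∀ t ∈ Q, ∀ t' ∈ Q, ∀ x, e (t x) = e (t' x) → t x = t' x := by
  classical
  let F : Finset α := Q.biUnion fun t => Finset.univ.image t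
  have hF : ∀ t ∈ Q, ∀ x, t x ∈ F := fun t ht x =>
    Finset.mem_biUnion.mpr ⟨t, ht, Finset.mem_image_of_mem _ (Finset.mem_univ x)⟩
  refine ⟨F.card, fun c => if h : c ∈ F then Sum.inl (F.equivFin ⟨c, h⟩) else Sum.inr (), ?_⟩
  intro t ht t' ht' x h
  simpa [hF t ht x, hF t' ht' x] using h

end key

/-- **Theorem: `ℓ_p` bounds on the query output size.**
Let `Q(X) = ⋀_j R_j(Y_j)` be a full conjunctive query (the relations are represented by
finite sets of full tuples over the variable set `X`; the relation `R_j` only "uses" the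
attributes in `Y j`, i.e. the join condition and the degree statistics only look at those
coordinates).  If the information inequality
`∑ i, w i * ((1/p i)·h(U i) + h(V i|U i)) ≥ h(X)` holds for every entropic vector `h`
(of jointly distributed finite-range random variables indexed by `X`), and each conditional
`(V i|U i)` is guarded by atom `j i`, then for every database instance `D` the output size
satisfies `|Q(D)| ≤ ∏ i, ‖deg_{D (j i)}(V i|U i)‖_{p i} ^ (w i)`. -/
theorem query_output_lp_bound {X : Type*} [Fintype X] [DecidableEq X]
    (m : ℕ) (Y : Fin m → Finset X) (hcover : ∀ x : X, ∃ j, x ∈ Y j)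
    (s : ℕ) (U V : Fin s → Finset X) (w : Fin s → ℝ) (hw : ∀ i, 0 ≤ w i)
    (p : Fin s → ℝ≥0∞) (hp : ∀ i, 0 < p i)
    (j : Fin s → Fin m) (hguard : ∀ i, U i ∪ V i ⊆ Y (j i))
    (hii : ∀ (β : Type) [Fintype β] [DecidableEq β] (P : (X → β) → ℝ),
      (∀ t, 0 ≤ P t) → (∑ t, P t = 1) →
      ∑ i, w i * ((1 / p i).toReal * entropy P Finset.univ (U i) +
          (entropy P Finset.univ (U i ∪ V i) - entropy P Finset.univ (U i)))
        ≥ entropy P Finset.univ (Finset.univ : Finset X))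
    (γ : Type*) [DecidableEq γ]
    (D : Fin m → Finset (X → γ)) (Q : Finset (X → γ))
    (hQ : ∀ t, t ∈ Q ↔ ∀ k : Fin m, ∃ t' ∈ D k, ∀ x ∈ Y k, t x = t' x) :
    (Q.card : ℝ) ≤ ∏ i, lpNorm (U i) (V i) (D (j i)) (p i) ^ (w i) := by
  rcases Q.eq_empty_or_nonempty with hQe | hQn
  · rw [hQe]
    simp only [Finset.card_empty, Nat.cast_zero]
    exact Finset.prod_nonneg fun i _ => Real.rpow_nonneg (lpNorm_nonneg _ _ _ _) _
  have hN : (0 : ℝ) < Q.card := by exact_mod_cast Finset.card_pos.mpr hQn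
  have hk := fun i => key_bound Q (D (j i)) hQn (Y (j i)) (U i) (V i) (hguard i)
    (fun t ht => (hQ t).1 ht (j i)) (p i) (hp i)
  obtain ⟨n, e, he⟩ := exists_code Q
  have hinj : Set.InjOn (fun t : X → γ => e ∘ t) Q := by
    intro t ht t' ht' h
    funext x
    exact he t ht t' ht' x (congrFun h x)
  have h := hii (Fin n ⊕ Unit)
    (fun t => if t ∈ Q.image (fun t => e ∘ t) then 1 / (Q.card : ℝ) else 0)
    (fun t => by split_ifs <;> positivity)
    (by
      rw [← Finset.sum_filter, Finset.filter_mem_eq_inter, Finset.univ_inter,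
        Finset.sum_image hinj, Finset.sum_const, nsmul_eq_mul]
      field_simp)
  simp only [entropy_transport Q e he, HH_univ Q hQn] at h
  have h2 : ∑ i, w i * ((1 / p i).toReal * HH Q (U i) + (HH Q (U i ∪ V i) - HH Q (U i))) ≤
      Real.logb 2 (∏ i, lpNorm (U i) (V i) (D (j i)) (p i) ^ (w i)) := by
    rw [Real.logb_prod _ _ fun i _ => (Real.rpow_pos_of_pos (hk i).1 _).ne']
    apply Finset.sum_le_sum
    intro i _
    rw [Real.logb_rpow_eq_mul_logb_of_pos (hk i).1]
    exact mul_le_mul_of_nonneg_left (hk i).2 (hw i)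
  exact (Real.logb_le_logb (by norm_num) hN
    (Finset.prod_pos fun i _ => Real.rpow_pos_of_pos (hk i).1 _)).1 (h.le.trans h2)

end JoinBounds
end

section
/- Let X be an n-element variable set, let Σ = {τ_1, …, τ_s} be a set of abstract statistics over X, and let b ∈ ℝ^s with b_i > 0 for all i. Let K ⊆ ℝ^{2^X} be a topologically closed convex cone with N_n ⊆ K ⊆ Γ_n. Then Log-U-Bound_K(Σ, b) = Log-L-Bound_K(Σ, b). -/
open scoped BigOperators ENNReal

namespace JoinBounds

noncomputable section

variable {A : Type*}

/-- `h(τ)` for the abstract statistics `τ = ((V|U), p)`: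
`(1/p)·h(U) + h(V|U)` where `h(V|U) = h(U ∪ V) - h(U)` and `1/∞ = 0`. -/
def statVal [DecidableEq A] (h : Finset A → ℝ) (U V : Finset A) (p : ℝ≥0∞) : ℝ :=
  (1 / p).toReal * h U + (h (U ∪ V) - h U)

/-- A polymatroid on the variable set `A`. -/
def IsPolymatroid [DecidableEq A] (h : Finset A → ℝ) : Prop :=
  h ∅ = 0 ∧ (∀ U V : Finset A, U ⊆ V → h U ≤ h V) ∧
    ∀ U V : Finset A, h U + h V ≥ h (U ∪ V) + h (U ∩ V)

/-- The set `Γ_n` of polymatroids. -/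
def Gamma (A : Type*) [DecidableEq A] : Set (Finset A → ℝ) := {h | IsPolymatroid h}

/-- The step function `h^W`. -/
def stepFn [DecidableEq A] (W : Finset A) : Finset A → ℝ :=
  fun U => if (U ∩ W).Nonempty then 1 else 0

/-- The set `N_n` of normal polymatroids: nonnegative linear combinations of step functions. -/
def Normal (A : Type*) [Fintype A] [DecidableEq A] : Set (Finset A → ℝ) :=
  {h | ∃ α : Finset A → ℝ, (∀ W, 0 ≤ α W) ∧ h = ∑ W : Finset A, α W • stepFn W}

/-- `Log-U-Bound_K(Σ, b)`: the infimum of `∑ i, w i * b i` over all nonnegative `w` such that the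
`Σ`-inequality `∑ i, w i * h(τ i) ≥ h(X)` is valid for all `h ∈ K` (an `EReal`; `⊤` if no valid
inequality exists). -/
def LogUBound [Fintype A] [DecidableEq A] (K : Set (Finset A → ℝ)) (s : ℕ)
    (U V : Fin s → Finset A) (p : Fin s → ℝ≥0∞) (b : Fin s → ℝ) : EReal :=
  sInf {r : EReal | ∃ w : Fin s → ℝ, (∀ i, 0 ≤ w i) ∧
    (∀ h ∈ K, ∑ i, w i * statVal h (U i) (V i) (p i) ≥ h Finset.univ) ∧
    r = ((∑ i, w i * b i : ℝ) : EReal)}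

/-- `Log-L-Bound_K(Σ, b)`: the supremum of `h(X)` over all `h ∈ K` satisfying the
log-statistics `h(τ i) ≤ b i` (an `EReal`). -/
def LogLBound [Fintype A] [DecidableEq A] (K : Set (Finset A → ℝ)) (s : ℕ)
    (U V : Fin s → Finset A) (p : Fin s → ℝ≥0∞) (b : Fin s → ℝ) : EReal :=
  sSup {r : EReal | ∃ h ∈ K, (∀ i, statVal h (U i) (V i) (p i) ≤ b i) ∧
    r = ((h Finset.univ : ℝ) : EReal)}

end

end JoinBounds

namespace JoinBounds

open scoped Pointwise in
/-- Strong duality for a convex cone, with the Slater point `0`. -/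
theorem strong_duality {E : Type*} [AddCommGroup E] [Module ℝ E] {s : ℕ}
    (g : E →ₗ[ℝ] (Fin s → ℝ)) (φ : E →ₗ[ℝ] ℝ) (b : Fin s → ℝ) (hb : ∀ i, 0 < b i)
    (K : Set E) (hconvex : Convex ℝ K)
    (hcone : ∀ (c : ℝ), 0 ≤ c → ∀ h ∈ K, c • h ∈ K) (h0 : (0 : E) ∈ K)
    (M : ℝ) (hM : ∀ h ∈ K, (∀ i, g h i ≤ b i) → φ h ≤ M) :
    ∃ w : Fin s → ℝ, (∀ i, 0 ≤ w i) ∧ (∀ h ∈ K, φ h ≤ ∑ i, w i * g h i) ∧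
      ∑ i, w i * b i ≤ M := by
  have lim1 : ∀ a k : ℝ, (∀ ε : ℝ, 0 < ε → a + ε * k ≤ 0) → a ≤ 0 := by
    intro a k H
    by_contra! ha
    have hk : 0 < |k| + 1 := by positivity
    have h1 := H (a / (2 * (|k| + 1))) (by positivity)
    have h2 : a / (2 * (|k| + 1)) * (|k| + 1) = a / 2 := by field_simp
    have h3 : 0 < a / (2 * (|k| + 1)) := by positivity
    have h4 := neg_abs_le k
    nlinarith
  have lim2 : ∀ a c : ℝ, (∀ t : ℝ, 0 < t → t * a < c) → a ≤ 0 ∧ 0 ≤ c := by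
    intro a c H
    constructor
    · by_contra! ha
      have h1 := H ((|c| + 1) / a) (by positivity)
      rw [div_mul_cancel₀ _ ha.ne'] at h1
      have := le_abs_self c
      linarith
    · have := lim1 (-c) a (fun ε hε => by have := H ε hε; linarith)
      linarith
  set P : Set ((Fin s → ℝ) × ℝ) :=
    (Set.univ.pi fun _ => Set.Ioi (0 : ℝ)) ×ˢ Set.Iio (0 : ℝ) with hPdef
  have hPmem : ∀ y t, (∀ i, 0 < y i) → t < 0 → ((y, t) : (Fin s → ℝ) × ℝ) ∈ P := by
    intro y t hy ht
    simp [hPdef, hy, ht]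
  have hPo : IsOpen P :=
    (isOpen_set_pi Set.finite_univ fun _ _ => isOpen_Ioi).prod isOpen_Iio
  have hPc : Convex ℝ P :=
    (convex_pi fun _ _ => convex_Ioi (0 : ℝ)).prod (convex_Iio (0 : ℝ))
  have hPcone : ∀ (c : ℝ), 0 < c → ∀ q ∈ P, c • q ∈ P := by
    rintro c hc ⟨y, t⟩ hq
    simp only [hPdef, Set.mem_prod, Set.mem_pi, Set.mem_univ, Set.mem_Ioi, Set.mem_Iio,
      true_implies] at hq
    exact hPmem _ _ (fun i => mul_pos hc (hq.1 i)) (mul_neg_of_pos_of_neg hc hq.2)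
  have hDc : Convex ℝ ((g.prod φ) '' K + P) := (hconvex.linear_image _).add hPc
  have hDo : IsOpen ((g.prod φ) '' K + P) := hPo.add_left
  have hnot : ((b, M) : (Fin s → ℝ) × ℝ) ∉ (g.prod φ) '' K + P := by
    rintro ⟨_, ⟨h, hh, rfl⟩, ⟨y, t⟩, hq, heq⟩
    simp only [hPdef, Set.mem_prod, Set.mem_pi, Set.mem_univ, Set.mem_Ioi, Set.mem_Iio,
      true_implies] at hq
    have e1 : g h + y = b := congrArg Prod.fst heq
    have e2 : φ h + t = M := congrArg Prod.snd heq
    have := hM h hh (fun i => by rw [← e1]; have := hq.1 i; simp; linarith)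
    linarith [hq.2]
  obtain ⟨f, hf⟩ := geometric_hahn_banach_open_point hDc hDo hnot
  have hf1 : ∀ h ∈ K, ∀ q ∈ P, f (g h, φ h) + f q < f (b, M) := by
    intro h hh q hq
    have := hf _ (Set.add_mem_add (Set.mem_image_of_mem _ hh) hq)
    rw [map_add] at this
    exact this
  have hf2 : ∀ h ∈ K, ∀ q ∈ P, f (g h, φ h) + f q ≤ 0 ∧ 0 ≤ f (b, M) := by
    intro h hh q hq
    apply lim2
    intro t ht
    have := hf1 _ (hcone t ht.le h hh) _ (hPcone t ht q hq)
    have e : ((g (t • h), φ (t • h)) : (Fin s → ℝ) × ℝ) = t • (g h, φ h) := by simp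
    rw [e, map_smul, map_smul, smul_eq_mul, smul_eq_mul] at this
    linarith
  have hone : (((fun _ => 1), -1) : (Fin s → ℝ) × ℝ) ∈ P :=
    hPmem _ _ (fun _ => one_pos) (by norm_num)
  have hfP : ∀ h ∈ K, f (g h, φ h) ≤ 0 := by
    intro h hh
    apply lim1 _ (f ((fun _ => 1), -1))
    intro ε hε
    have := (hf2 h hh _ (hPcone ε hε _ hone)).1
    rwa [map_smul, smul_eq_mul] at this
  have hfQ : ∀ y t, (∀ i, 0 ≤ y i) → t ≤ 0 → f (y, t) ≤ 0 := by
    intro y t hy ht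
    apply lim1 _ (f ((fun _ => 1), -1))
    intro ε hε
    have hq : ((y, t) : (Fin s → ℝ) × ℝ) + ε • ((fun _ => 1), -1) ∈ P := by
      apply hPmem
      · intro i
        have := hy i
        simp
        linarith
      · simp
        linarith
    have := (hf2 0 h0 _ hq).1
    rw [map_add, map_smul, smul_eq_mul] at this
    have e : f (g 0, φ 0) = 0 := by
      rw [map_zero, map_zero]
      exact map_zero f
    linarith
  set μ : ℝ := f (0, 1) with hμ
  set l : Fin s → ℝ := fun i => f (Pi.single i 1, 0) with hl
  have hdec : ∀ y t, f (y, t) = ∑ i, y i * l i + t * μ := by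
    intro y t
    have e : ((y, t) : (Fin s → ℝ) × ℝ) =
        ∑ i, y i • ((Pi.single i 1, 0) : (Fin s → ℝ) × ℝ) + t • ((0, 1) : (Fin s → ℝ) × ℝ) := by
      ext j
      · simp [Prod.fst_sum, Finset.sum_apply, Pi.single_apply]
      · simp [Prod.snd_sum]
    rw [e, map_add, map_sum, map_smul]
    simp only [map_smul, smul_eq_mul, hl, hμ]
  have hl0 : ∀ i, l i ≤ 0 := fun i => hfQ _ _ (fun j => by
    by_cases hij : j = i
    · subst hij; simp
    · simp [hij]) le_rfl
  have hμ0 : 0 ≤ μ := by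
    have := hfQ 0 (-1) (fun _ => le_rfl) (by norm_num)
    rw [hdec] at this
    simp at this
    exact this
  have hμne : μ ≠ 0 := by
    intro h
    have := hf1 0 h0 (b, -1) (hPmem _ _ hb (by norm_num))
    simp only [map_zero, hdec, h] at this
    simp at this
  have hμpos : 0 < μ := lt_of_le_of_ne hμ0 hμne.symm
  have hsum : ∀ y : Fin s → ℝ, ∑ i, (-l i / μ) * y i = -(∑ i, y i * l i) / μ := by
    intro y
    rw [← Finset.sum_neg_distrib, Finset.sum_div]
    exact Finset.sum_congr rfl fun i _ => by ring
  refine ⟨fun i => -l i / μ, fun i => div_nonneg (by linarith [hl0 i]) hμ0, ?_, ?_⟩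
  · intro h hh
    rw [hsum, le_div_iff₀ hμpos]
    have := hfP h hh
    rw [hdec] at this
    linarith
  · rw [hsum, div_le_iff₀ hμpos]
    have := (hf2 0 h0 _ hone).2
    rw [hdec] at this
    linarith

/-- **duality theorem.** For any topologically closed convex cone `K` with
`N_n ⊆ K ⊆ Γ_n`, and any set of abstract statistics with positive log-statistics `b`,
`Log-U-Bound_K(Σ, b) = Log-L-Bound_K(Σ, b)`. -/
theorem logUBound_eq_logLBound {A : Type*} [Fintype A] [DecidableEq A]
    (s : ℕ) (U V : Fin s → Finset A) (p : Fin s → ℝ≥0∞) (hp : ∀ i, 0 < p i)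
    (b : Fin s → ℝ) (hb : ∀ i, 0 < b i)
    (K : Set (Finset A → ℝ)) (hclosed : IsClosed K) (hconvex : Convex ℝ K)
    (hcone : ∀ (c : ℝ), 0 ≤ c → ∀ h ∈ K, c • h ∈ K)
    (hNK : Normal A ⊆ K) (hKG : K ⊆ Gamma A) :
    LogUBound K s U V p b = LogLBound K s U V p b := by
  have h0 : (0 : Finset A → ℝ) ∈ K := hNK ⟨0, fun _ => le_rfl, by simp⟩
  apply le_antisymm
  · let g : (Finset A → ℝ) →ₗ[ℝ] (Fin s → ℝ) :=
      { toFun := fun h i => statVal h (U i) (V i) (p i)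
        map_add' := fun x y => by ext i; simp [statVal]; ring
        map_smul' := fun c x => by ext i; simp [statVal]; ring }
    let φ : (Finset A → ℝ) →ₗ[ℝ] ℝ := LinearMap.proj Finset.univ
    have key : ∀ M : ℝ, LogLBound K s U V p b ≤ (M : EReal) →
        LogUBound K s U V p b ≤ (M : EReal) := by
      intro M hM
      obtain ⟨w, hw0, hw1, hw2⟩ := strong_duality g φ b hb K hconvex hcone h0 M
        (fun h hh hle => by
          have h1 : ((h Finset.univ : ℝ) : EReal) ≤ LogLBound K s U V p b :=
            le_sSup ⟨h, hh, hle, rfl⟩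
          exact EReal.coe_le_coe_iff.1 (h1.trans hM))
      exact le_trans (sInf_le ⟨w, hw0, fun h hh => hw1 h hh, rfl⟩) (EReal.coe_le_coe_iff.2 hw2)
    exact EReal.le_of_forall_lt_iff_le.1 fun z hz => key z hz.le
  · apply sSup_le
    rintro _ ⟨h, hh, hle, rfl⟩
    apply le_sInf
    rintro _ ⟨w, hw0, hw, rfl⟩
    exact EReal.coe_le_coe_iff.2 ((hw h hh).trans
      (Finset.sum_le_sum fun i _ => mul_le_mul_of_nonneg_left (hle i) (hw0 i)))

end JoinBounds
end

section
/- Let Q(X) = ⋀_{j∈[m]} R_j(Y_j) be a full conjunctive query with n = |X| variables, let Σ = {τ_1, …, τ_s} be a simple set of abstract statistics over X (each τ_i = ((V_i|U_i), p_i) with |U_i| ≤ 1), each guarded by some atom R_{j_i} of Q (i.e. U_i ∪ V_i ⊆ Y_{j_i}), and let b ∈ ℝ^s with b_i > 0 for all i. Suppose L := Log-U-Bound_{Γ_n}(Σ, b) is finite. Then there exists a database instance D = (R_1^D, …, R_m^D) such that ||deg_{R_{j_i}^D}(V_i|U_i)||_{p_i} ≤ 2^{b_i} for all i ∈ [s],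 and |Q(D)| ≥ 2^{L − 2^n}. -/
open scoped BigOperators ENNReal

namespace JoinBounds

noncomputable section

variable {A α : Type*}

lemma aux_lim {A B C : ℝ} (h : ∀ ε : ℝ, 0 < ε → A + ε * B ≤ C) : A ≤ C := by
  by_contra hc
  push Not at hc
  have hB : 0 < |B| + 1 := by positivity
  have h1 := h ((A - C) / (2 * (|B| + 1))) (by apply div_pos <;> linarith)
  have h2 : (A - C) / (2 * (|B| + 1)) * (|B| + 1) = (A - C) / 2 := by field_simp
  have h3 : 0 < (A - C) / (2 * (|B| + 1)) := by apply div_pos <;> linarith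
  have h4 := neg_abs_le B
  nlinarith

lemma aux_ray {B C : ℝ} (h : ∀ t : ℝ, 0 ≤ t → t * B ≤ C) : B ≤ 0 := by
  by_contra hc
  push Not at hc
  have h1 := h ((|C| + 1) / B) (by positivity)
  have h2 : (|C| + 1) / B * B = |C| + 1 := by field_simp
  have := le_abs_self C
  linarith

lemma lp_dual {ι κ : Type*} [Fintype ι] [Fintype κ] (M : κ → ι → ℝ) (b : κ → ℝ)
    (hb : ∀ k, 0 < b k) (r : ℝ)
    (hno : ∀ α : ι → ℝ, (∀ i, 0 ≤ α i) → (∀ k, ∑ i, M k i * α i < b k) → ∑ i, α i ≤ r) :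
    ∃ w : κ → ℝ, (∀ k, 0 ≤ w k) ∧ (∀ i, 1 ≤ ∑ k, w k * M k i) ∧ ∑ k, w k * b k ≤ r := by
  classical
  let C : Set ((κ → ℝ) × ℝ) :=
    {q | ∃ α : ι → ℝ, (∀ i, 0 ≤ α i) ∧ (∀ k, ∑ i, M k i * α i < q.1 k) ∧ q.2 < ∑ i, α i}
  have hopen : IsOpen C := by
    have : C = ⋃ α : {α : ι → ℝ // ∀ i, 0 ≤ α i},
        ((⋂ k, {q : (κ → ℝ) × ℝ | ∑ i, M k i * α.1 i < q.1 k}) ∩ {q | q.2 < ∑ i, α.1 i}) := by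
      ext q
      simp [C]
      exact exists_congr fun _ => and_left_comm
    rw [this]
    refine isOpen_iUnion fun α => IsOpen.inter (isOpen_iInter_of_finite fun k => ?_) ?_
    · exact isOpen_lt (by fun_prop) (by fun_prop)
    · exact isOpen_lt (by fun_prop) (by fun_prop)
  have hconv : Convex ℝ C := by
    rintro ⟨y, t⟩ ⟨α, ha, hy, ht⟩ ⟨y', t'⟩ ⟨α', ha', hy', ht'⟩ u v hu hv huv
    have key : ∀ x x' z z' : ℝ, x < z → x' < z' → u * x + v * x' < u * z + v * z' := by
      intro x x' z z' h1 h2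
      rcases hu.eq_or_lt with h | h
      · subst h
        have : v = 1 := by linarith
        subst this; linarith
      · have := mul_lt_mul_of_pos_left h1 h
        have := mul_le_mul_of_nonneg_left h2.le hv
        linarith
    refine ⟨fun i => u * α i + v * α' i, fun i => ?_, fun k => ?_, ?_⟩
    · have := ha i; have := ha' i; positivity
    · have := key _ _ _ _ (hy k) (hy' k)
      simp only [Finset.mul_sum, ← Finset.sum_add_distrib] at this
      refine lt_of_le_of_lt (le_of_eq ?_) this
      exact Finset.sum_congr rfl fun i _ => by ring
    · have := key _ _ _ _ ht ht'
      simp only [Finset.mul_sum, ← Finset.sum_add_distrib] at this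
      exact this
  have hnot : (b, r) ∉ C := by
    rintro ⟨α, ha, hy, ht⟩
    exact absurd (hno α ha hy) (not_le.2 ht)
  obtain ⟨f, hf⟩ := geometric_hahn_banach_open_point hconv hopen hnot
  let w : κ → ℝ := fun k => - f (Pi.single k 1, 0)
  let l : ℝ := f (0, 1)
  have hfe : ∀ y t, f (y, t) = - ∑ k, w k * y k + l * t := by
    intro y t
    have h1 : ((y, t) : (κ → ℝ) × ℝ) =
        ∑ k, y k • ((Pi.single k 1, 0) : (κ → ℝ) × ℝ) + t • ((0, 1) : (κ → ℝ) × ℝ) := by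
      ext k
      · simp [Prod.fst_sum, Finset.sum_apply, Pi.single_apply]
      · simp [Prod.snd_sum]
    rw [h1, map_add, map_sum]
    simp only [map_smul, smul_eq_mul]
    rw [← Finset.sum_neg_distrib, mul_comm l t]
    congr 1
    exact Finset.sum_congr rfl fun k _ => by simp only [w]; ring
  have hstrict : ∀ (α : ι → ℝ) (y : κ → ℝ) (t : ℝ), (∀ i, 0 ≤ α i) → (∀ k, ∑ i, M k i * α i < y k) →
      t < ∑ i, α i → - ∑ k, w k * y k + l * t < - ∑ k, w k * b k + l * r := by
    intro α y t h1 h2 h3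
    rw [← hfe, ← hfe]
    exact hf _ ⟨α, h1, h2, h3⟩
  have hcl : ∀ (α : ι → ℝ) (y : κ → ℝ) (t : ℝ), (∀ i, 0 ≤ α i) → (∀ k, ∑ i, M k i * α i ≤ y k) →
      t ≤ ∑ i, α i → - ∑ k, w k * y k + l * t ≤ - ∑ k, w k * b k + l * r := by
    intro α y t h1 h2 h3
    apply aux_lim (B := - ∑ k, w k - l)
    intro ε he
    have := hstrict α (fun k => y k + ε) (t - ε) h1 (fun k => by have := h2 k; linarith)
      (by linarith)
    simp only [mul_add, Finset.sum_add_distrib, ← Finset.sum_mul] at this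
    linarith
  have hw : ∀ k, 0 ≤ w k := by
    intro k
    have : - w k ≤ 0 := by
      apply aux_ray (C := - ∑ k, w k * b k + l * r)
      intro t ht
      have := hcl 0 (Pi.single k t) 0 (fun _ => le_rfl) (fun k' => by
        by_cases hk : k' = k
        · subst hk; simpa using ht
        · simp [hk]) (by simp)
      simp [Pi.single_apply] at this
      linarith
    linarith
  have hl : 0 ≤ l := by
    have : - l ≤ 0 := by
      apply aux_ray (C := - ∑ k, w k * b k + l * r)
      intro t ht
      have := hcl 0 0 (-t) (fun _ => le_rfl) (fun k' => by simp) (by simpa using ht)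
      simp at this
      linarith
    linarith
  have hl0 : 0 < l := by
    rcases hl.eq_or_lt with h | h
    · exfalso
      have := hstrict 0 (fun k => b k / 2) (-1) (fun _ => le_rfl)
        (fun k => by have := hb k; simp; linarith) (by simp)
      rw [← h] at this
      have h2 : ∑ k, w k * (b k / 2) = (∑ k, w k * b k) / 2 := by
        rw [Finset.sum_div]; exact Finset.sum_congr rfl fun k _ => by ring
      have h3 : 0 ≤ ∑ k, w k * b k :=
        Finset.sum_nonneg fun k _ => mul_nonneg (hw k) (hb k).le
      linarith
    · exact h
  refine ⟨fun k => w k / l, fun k => div_nonneg (hw k) hl, fun i => ?_, ?_⟩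
  · have h1 : - ∑ k, w k * M k i + l ≤ 0 := by
      apply aux_ray (C := - ∑ k, w k * b k + l * r)
      intro t ht
      have := hcl (Pi.single i t) (fun k => M k i * t) t (fun i' => by
        by_cases hk : i' = i
        · subst hk; simpa using ht
        · simp [hk]) (fun k => by simp [Pi.single_apply]) (by simp)
      have h2 : ∑ k, w k * (M k i * t) = (∑ k, w k * M k i) * t := by
        rw [Finset.sum_mul]; exact Finset.sum_congr rfl fun k _ => by ring
      rw [h2] at this
      linarith
    have h2 : ∑ k, w k / l * M k i = (∑ k, w k * M k i) / l := by
      rw [Finset.sum_div]; exact Finset.sum_congr rfl fun k _ => by ring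
    rw [h2, le_div_iff₀ hl0]
    linarith
  · have := hcl 0 0 0 (fun _ => le_rfl) (fun k' => by simp) (by simp)
    simp at this
    have h2 : ∑ k, w k / l * b k = (∑ k, w k * b k) / l := by
      rw [Finset.sum_div]; exact Finset.sum_congr rfl fun k _ => by ring
    rw [h2, div_le_iff₀ hl0]
    linarith

lemma normal_add {X : Type*} [Fintype X] [DecidableEq X] {g h : Finset X → ℝ}
    (hg : g ∈ Normal X) (hh : h ∈ Normal X) : g + h ∈ Normal X := by
  obtain ⟨α, ha, rfl⟩ := hg
  obtain ⟨β, hb, rfl⟩ := hh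
  exact ⟨α + β, fun W => add_nonneg (ha W) (hb W), by
    simp [add_smul, Finset.sum_add_distrib]⟩

lemma normal_step {X : Type*} [Fintype X] [DecidableEq X] (c : ℝ) (hc : 0 ≤ c) (W : Finset X) :
    c • stepFn W ∈ Normal X := by
  refine ⟨Pi.single W c, fun W' => ?_, ?_⟩
  · by_cases h : W' = W
    · subst h; simpa using hc
    · simp [h]
  · rw [Finset.sum_eq_single W]
    · simp
    · intro W' _ h; simp [h]
    · simp

lemma normal_sup {X : Type*} [Fintype X] [DecidableEq X] (n : ℕ) : ∀ (f : X → NNReal),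
    (Finset.univ.filter fun x => f x ≠ 0).card = n →
    (fun U : Finset X => ((U.sup f : NNReal) : ℝ)) ∈ Normal X := by
  induction n using Nat.strong_induction_on with
  | _ n ih =>
  intro f hf
  set T := Finset.univ.filter fun x => f x ≠ 0 with hT
  by_cases hne : T.Nonempty
  · obtain ⟨a, haT, hmin⟩ := Finset.exists_min_image T f hne
    have hTm : ∀ x, x ∈ T ↔ f x ≠ 0 := by simp [hT]
    let f' : X → NNReal := fun x => f x - f a
    have hlt : (Finset.univ.filter fun x => f' x ≠ 0).card < n := by
      rw [← hf]
      apply Finset.card_lt_card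
      rw [Finset.ssubset_iff_of_subset]
      · exact ⟨a, haT, by simp [f']⟩
      · intro x hx
        rw [hTm]
        intro h0
        simp [f', h0] at hx
    have h1 := normal_add (ih _ hlt f' rfl) (normal_step (f a : ℝ) (f a).2 T)
    convert h1 using 1
    funext U
    simp only [Pi.add_apply, Pi.smul_apply, stepFn, smul_eq_mul]
    split_ifs with hU
    · obtain ⟨z, hz⟩ := hU
      rw [Finset.mem_inter] at hz
      rw [mul_one, ← NNReal.coe_add]
      congr 1
      apply le_antisymm
      · apply Finset.sup_le
        intro x hx
        have : f' x ≤ U.sup f' := Finset.le_sup (f := f') hx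
        calc f x ≤ f' x + f a := le_tsub_add
          _ ≤ _ := by gcongr
      · have hza : f a ≤ U.sup f := (hmin z hz.2).trans (Finset.le_sup (f := f) hz.1)
        have : U.sup f' ≤ U.sup f - f a := by
          apply Finset.sup_le
          intro x hx
          exact tsub_le_tsub_right (Finset.le_sup (f := f) hx) _
        calc U.sup f' + f a ≤ (U.sup f - f a) + f a := by gcongr
          _ = _ := tsub_add_cancel_of_le hza
    · have hz : ∀ x ∈ U, f x = 0 := by
        intro x hx
        by_contra h0
        exact hU ⟨x, Finset.mem_inter.2 ⟨hx, (hTm x).2 h0⟩⟩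
      have e1 : U.sup f = 0 := by
        rw [← bot_eq_zero, Finset.sup_eq_bot_iff]; intro x hx; simp [hz x hx]
      have e2 : U.sup f' = 0 := by
        rw [← bot_eq_zero, Finset.sup_eq_bot_iff]; intro x hx; simp [f', hz x hx]
      simp [e1, e2]
  · have hz : ∀ x, f x = 0 := by
      intro x
      by_contra h0
      exact hne ⟨x, by simp [hT, h0]⟩
    refine ⟨0, fun _ => le_rfl, ?_⟩
    funext U
    have e1 : U.sup f = 0 := by
      rw [← bot_eq_zero, Finset.sup_eq_bot_iff]; intro x hx; simp [hz x]
    simp [e1]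

lemma exists_normal {X : Type*} [Fintype X] [DecidableEq X] (S : Finset X) :
    ∀ h : Finset X → ℝ, IsPolymatroid h → (∀ U, h U = h (U ∩ S)) →
    ∃ g ∈ Normal X, (∀ U, g U ≤ h U) ∧ g Finset.univ = h Finset.univ ∧ ∀ x, g {x} = h {x} := by
  induction S using Finset.induction_on with
  | empty =>
    intro h hp hS
    have h0 : ∀ U, h U = 0 := fun U => by rw [hS U, Finset.inter_empty, hp.1]
    exact ⟨0, ⟨0, fun _ => le_rfl, by simp⟩, fun U => by simp [h0], by simp [h0],
      fun x => by simp [h0]⟩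
  | insert a S ha ih =>
    intro h hp hS
    obtain ⟨hp0, hpm, hps⟩ := hp
    obtain ⟨g, hgN, hgle, hgu, hgx⟩ := ih (fun U => h (U ∪ {a}) - h {a})
      ⟨by simp, fun U V hUV => by
        have := hpm (U ∪ {a}) (V ∪ {a}) (Finset.union_subset_union_left hUV)
        simpa using this, fun U V => by
        have := hps (U ∪ {a}) (V ∪ {a})
        have e1 : (U ∪ {a}) ∪ (V ∪ {a}) = (U ∪ V) ∪ {a} := by
          ext; simp only [Finset.mem_union]; tauto
        have e2 : (U ∪ {a}) ∩ (V ∪ {a}) = (U ∩ V) ∪ {a} := by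
          ext; simp only [Finset.mem_union, Finset.mem_inter]; tauto
        rw [e1, e2] at this
        linarith⟩
      (fun U => by
        have e : (U ∪ {a}) ∩ insert a S = ((U ∩ S) ∪ {a}) := by
          ext; simp only [Finset.mem_union, Finset.mem_inter, Finset.mem_insert,
            Finset.mem_singleton]; tauto
        simp only [hS (U ∪ {a}), e])
    have hI : ∀ x, 0 ≤ h {x} + h {a} - h ({x} ∪ {a}) := fun x => by
      have h1 := hps {x} {a}
      have h2 := hpm ∅ ({x} ∩ {a}) (by simp)
      linarith
    let f : X → NNReal := fun x => Real.toNNReal (h {x} + h {a} - h ({x} ∪ {a}))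
    have hf : ∀ x, (f x : ℝ) = h {x} + h {a} - h ({x} ∪ {a}) :=
      fun x => Real.coe_toNNReal _ (hI x)
    refine ⟨_, normal_add hgN (normal_sup _ f rfl), fun U => ?_, ?_, fun x => ?_⟩
    · simp only [Pi.add_apply]
      have h1 := hgle U
      have hnn : 0 ≤ h U + h {a} - h (U ∪ {a}) := by
        have h1 := hps U {a}
        have h2 := hpm ∅ (U ∩ {a}) (by simp)
        linarith
      have h2 : U.sup f ≤ Real.toNNReal (h U + h {a} - h (U ∪ {a})) := by
        apply Finset.sup_le
        intro x hx
        apply Real.toNNReal_le_toNNReal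
        have h3 := hps U ({x} ∪ {a})
        have e1 : U ∪ ({x} ∪ {a}) = U ∪ {a} := by
          ext z; simp only [Finset.mem_union, Finset.mem_singleton]; grind
        have h4 := hpm {x} (U ∩ ({x} ∪ {a})) (by simp [hx])
        rw [e1] at h3
        linarith
      have h3 : ((U.sup f : NNReal) : ℝ) ≤ h U + h {a} - h (U ∪ {a}) := by
        have h5 := NNReal.coe_le_coe.2 h2
        rwa [Real.coe_toNNReal _ hnn] at h5
      linarith
    · simp only [Pi.add_apply]
      rw [hgu]
      have hnn : 0 ≤ h {a} := by
        have h2 := hpm ∅ {a} (by simp)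
        linarith
      have h2 : Finset.univ.sup f = Real.toNNReal (h {a}) := by
        apply le_antisymm
        · apply Finset.sup_le
          intro x hx
          apply Real.toNNReal_le_toNNReal
          have := hpm {x} ({x} ∪ {a}) (by simp)
          linarith
        · have : f a ≤ Finset.univ.sup f := Finset.le_sup (f := f) (Finset.mem_univ a)
          refine le_trans ?_ this
          apply Real.toNNReal_le_toNNReal
          simp
      have e : (Finset.univ : Finset X) ∪ {a} = Finset.univ := by simp
      rw [h2, e, Real.coe_toNNReal _ hnn]
      ring
    · simp only [Pi.add_apply]
      rw [hgx, Finset.sup_singleton, hf]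
      ring

lemma statVal_normal {X : Type*} [Fintype X] [DecidableEq X] (α : Finset X → ℝ)
    (U V : Finset X) (p : ℝ≥0∞) :
    statVal (∑ W, α W • stepFn W) U V p = ∑ W, α W * statVal (stepFn W) U V p := by
  simp only [statVal, Finset.sum_apply, Pi.smul_apply, smul_eq_mul]
  rw [Finset.mul_sum, ← Finset.sum_sub_distrib, ← Finset.sum_add_distrib]
  exact Finset.sum_congr rfl fun W _ => by ring

lemma valid_of_step {X : Type*} [Fintype X] [DecidableEq X] (s : ℕ) (U V : Fin s → Finset X)
    (p : Fin s → ℝ≥0∞) (hsimple : ∀ i, (U i).card ≤ 1) (w : Fin s → ℝ) (hw : ∀ i, 0 ≤ w i)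
    (hv : ∀ W : Finset X, W.Nonempty →
      1 ≤ ∑ i, w i * statVal (stepFn W) (U i) (V i) (p i))
    (h : Finset X → ℝ) (hh : IsPolymatroid h) :
    ∑ i, w i * statVal h (U i) (V i) (p i) ≥ h Finset.univ := by
  obtain ⟨g, ⟨α, ha, hg⟩, hle, hu, hx⟩ := exists_normal Finset.univ h hh (by simp)
  have hg0 : g ∅ = 0 := by
    rw [hg]; simp [stepFn]
  have h1 : ∀ i, statVal g (U i) (V i) (p i) ≤ statVal h (U i) (V i) (p i) := by
    intro i
    have e : g (U i) = h (U i) := by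
      rcases (U i).eq_empty_or_nonempty with h0 | ⟨x, hxU⟩
      · rw [h0, hg0, hh.1]
      · have : U i = {x} := by
          ext y
          simp only [Finset.mem_singleton]
          exact ⟨fun hy => Finset.card_le_one.1 (hsimple i) _ hy _ hxU, fun hy => hy ▸ hxU⟩
        rw [this, hx]
    simp only [statVal, e]
    have := hle (U i ∪ V i)
    linarith
  calc h Finset.univ = g Finset.univ := hu.symm
    _ = ∑ W, α W * stepFn W Finset.univ := by rw [hg]; simp
    _ ≤ ∑ W, α W * ∑ i, w i * statVal (stepFn W) (U i) (V i) (p i) := by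
      apply Finset.sum_le_sum
      intro W _
      apply mul_le_mul_of_nonneg_left _ (ha W)
      rcases W.eq_empty_or_nonempty with h0 | h0
      · subst h0; simp [stepFn, statVal]
      · refine le_trans ?_ (hv W h0)
        simp only [stepFn]; split_ifs <;> norm_num
    _ = ∑ i, w i * statVal g (U i) (V i) (p i) := by
      rw [hg]
      simp only [statVal_normal, Finset.mul_sum]
      rw [Finset.sum_comm]
      exact Finset.sum_congr rfl fun i _ => Finset.sum_congr rfl fun W _ => by ring
    _ ≤ _ := Finset.sum_le_sum fun i _ => mul_le_mul_of_nonneg_left (h1 i) (hw i)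

/-- The tuple determined by an assignment `ω`. -/
def tup {X ι : Type*} [DecidableEq X] (S : ι → Finset X) (ω : ι → ℕ) : X → (ι → ℕ) :=
  fun x i => if x ∈ S i then ω i else 0

/-- The relation of all tuples. -/
def tups {X ι : Type*} [Fintype X] [DecidableEq X] [Fintype ι] [DecidableEq ι]
    (S : ι → Finset X) (N : ι → ℕ) : Finset (X → (ι → ℕ)) :=
  (Fintype.piFinset fun i => Finset.range (N i)).image (tup S)

lemma card_tups {X ι : Type*} [Fintype X] [DecidableEq X] [Fintype ι] [DecidableEq ι]
    (S : ι → Finset X) (hS : ∀ i, (S i).Nonempty) (N : ι → ℕ) :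
    (tups S N).card = ∏ i, N i := by
  rw [tups, Finset.card_image_of_injective, Fintype.card_piFinset]
  · simp
  · intro ω ω' h
    funext i
    obtain ⟨x, hx⟩ := hS i
    have := congrFun (congrFun h x) i
    simpa [tup, hx] using this

lemma proj_congr {X ι : Type*} [DecidableEq X] (S : ι → Finset X) (U : Finset X)
    (ω ω' : ι → ℕ) (h : ∀ i, (U ∩ S i).Nonempty → ω i = ω' i) :
    proj U (tup S ω) = proj U (tup S ω') := by
  funext x
  simp only [proj]
  split_ifs with hx
  · congr 1
    funext i
    simp only [tup]
    split_ifs with hi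
    · exact h i ⟨x, Finset.mem_inter.2 ⟨hx, hi⟩⟩
    · rfl
  · rfl

lemma proj_inj {X ι : Type*} [DecidableEq X] (S : ι → Finset X) (U : Finset X)
    (ω ω' : ι → ℕ) (h : proj U (tup S ω) = proj U (tup S ω')) (i : ι)
    (hi : (U ∩ S i).Nonempty) : ω i = ω' i := by
  obtain ⟨x, hx⟩ := hi
  rw [Finset.mem_inter] at hx
  have := congrFun h x
  simp only [proj, hx.1, if_true, Option.some.injEq] at this
  have := congrFun this i
  simpa [tup, hx.2] using this

lemma card_projR_le {X ι : Type*} [Fintype X] [DecidableEq X] [Fintype ι] [DecidableEq ι]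
    (S : ι → Finset X) (N : ι → ℕ) (hN : ∀ i, 1 ≤ N i) (U : Finset X) :
    (projR U (tups S N)).card ≤ ∏ i, if (U ∩ S i).Nonempty then N i else 1 := by
  have hsub : projR U (tups S N) ⊆ (Fintype.piFinset fun i =>
      Finset.range (if (U ∩ S i).Nonempty then N i else 1)).image
        (fun ω => proj U (tup S ω)) := by
    intro u hu
    simp only [projR, tups, Finset.mem_image, Fintype.mem_piFinset, Finset.mem_range] at hu ⊢
    obtain ⟨_, ⟨ω, hω, rfl⟩, rfl⟩ := hu
    refine ⟨fun i => if (U ∩ S i).Nonempty then ω i else 0, fun i => ?_, ?_⟩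
    · by_cases h1 : (U ∩ S i).Nonempty
      · simpa [h1] using hω i
      · simp [h1]
    · apply proj_congr
      intro i hi
      simp [hi]
  refine (Finset.card_le_card hsub).trans (Finset.card_image_le.trans ?_)
  rw [Fintype.card_piFinset]
  simp

lemma deg_le_s5 {X ι : Type*} [Fintype X] [DecidableEq X] [Fintype ι] [DecidableEq ι]
    (S : ι → Finset X) (N : ι → ℕ) (hN : ∀ i, 1 ≤ N i) (U V : Finset X)
    (u : X → Option (ι → ℕ)) (hu : u ∈ projR U (tups S N)) :
    deg U V (tups S N) u ≤
      ∏ i, if (U ∩ S i).Nonempty then 1 else if (V ∩ S i).Nonempty then N i else 1 := by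
  simp only [projR, tups, Finset.mem_image] at hu
  obtain ⟨_, ⟨ω₀, hω₀, rfl⟩, rfl⟩ := hu
  have hsub : projR V ((tups S N).filter fun t => proj U t = proj U (tup S ω₀)) ⊆
      (Fintype.piFinset fun i => if (U ∩ S i).Nonempty then {ω₀ i} else
        Finset.range (if (V ∩ S i).Nonempty then N i else 1)).image
        (fun ω => proj V (tup S ω)) := by
    intro v hv
    simp only [projR, tups, Finset.mem_image, Finset.mem_filter, Fintype.mem_piFinset,
      Finset.mem_range] at hv ⊢
    obtain ⟨_, ⟨⟨ω, hω, rfl⟩, hωu⟩, rfl⟩ := hv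
    refine ⟨fun i => if (U ∩ S i).Nonempty then ω i else
      if (V ∩ S i).Nonempty then ω i else 0, fun i => ?_, ?_⟩
    · by_cases h1 : (U ∩ S i).Nonempty
      · simpa [h1] using proj_inj S U _ _ hωu i h1
      · by_cases h2 : (V ∩ S i).Nonempty
        · simpa [h1, h2] using hω i
        · simp [h1, h2]
    · apply proj_congr
      intro i hi
      simp [hi]
  refine (Finset.card_le_card hsub).trans (Finset.card_image_le.trans ?_)
  rw [Fintype.card_piFinset]
  apply le_of_eq
  apply Finset.prod_congr rfl
  intro i _
  split_ifs <;> simp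

lemma lpNorm_tups_le {X ι : Type*} [Fintype X] [DecidableEq X] [Fintype ι] [DecidableEq ι]
    (S : ι → Finset X) (N : ι → ℕ) (hN : ∀ i, 1 ≤ N i) (α : ι → ℝ)
    (hNa : ∀ i, (N i : ℝ) ≤ 2 ^ α i) (U V : Finset X) (p : ℝ≥0∞) (hp : 0 < p) :
    lpNorm U V (tups S N) p ≤ 2 ^ (∑ i, statVal (stepFn (S i)) U V p * α i) := by
  set d : ℕ := ∏ i, if (U ∩ S i).Nonempty then 1 else if (V ∩ S i).Nonempty then N i else 1
    with hd
  set c : ℕ := ∏ i, if (U ∩ S i).Nonempty then N i else 1 with hc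
  have hdle : (d : ℝ) ≤ 2 ^ (∑ i, (stepFn (S i) (U ∪ V) - stepFn (S i) U) * α i) := by
    rw [Real.rpow_sum_of_pos (by norm_num : (0 : ℝ) < 2), hd]
    push_cast
    apply Finset.prod_le_prod
    · intro i _; split_ifs <;> positivity
    · intro i _
      simp only [stepFn, Finset.union_inter_distrib_right, Finset.union_nonempty]
      by_cases h1 : (U ∩ S i).Nonempty <;> by_cases h2 : (V ∩ S i).Nonempty <;>
        simp [h1, h2, hNa]
  have hcle : (c : ℝ) ≤ 2 ^ (∑ i, stepFn (S i) U * α i) := by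
    rw [Real.rpow_sum_of_pos (by norm_num : (0 : ℝ) < 2), hc]
    push_cast
    apply Finset.prod_le_prod
    · intro i _; split_ifs <;> positivity
    · intro i _
      simp only [stepFn]
      by_cases h1 : (U ∩ S i).Nonempty <;> simp [h1, hNa]
  have hexp : ∑ i, statVal (stepFn (S i)) U V p * α i =
      (1 / p).toReal * (∑ i, stepFn (S i) U * α i) +
        ∑ i, (stepFn (S i) (U ∪ V) - stepFn (S i) U) * α i := by
    rw [Finset.mul_sum, ← Finset.sum_add_distrib]
    exact Finset.sum_congr rfl fun i _ => by simp only [statVal]; ring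
  rw [hexp]
  unfold lpNorm
  split_ifs with h
  · subst h
    simp only [ENNReal.div_top, ENNReal.toReal_zero, zero_mul, zero_add]
    refine le_trans ?_ hdle
    exact_mod_cast Finset.sup_le fun u hu => deg_le_s5 S N hN U V u hu
  · have hq : 0 < p.toReal := ENNReal.toReal_pos hp.ne' h
    have e1 : (1 / p).toReal = 1 / p.toReal := by simp
    rw [e1]
    have h1 : ∑ u ∈ projR U (tups S N), (deg U V (tups S N) u : ℝ) ^ p.toReal ≤
        c * (d : ℝ) ^ p.toReal := by
      calc _ ≤ ∑ u ∈ projR U (tups S N), (d : ℝ) ^ p.toReal := by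
            apply Finset.sum_le_sum
            intro u hu
            apply Real.rpow_le_rpow (by positivity) _ hq.le
            exact_mod_cast deg_le_s5 S N hN U V u hu
        _ = ((projR U (tups S N)).card : ℝ) * (d : ℝ) ^ p.toReal := by simp
        _ ≤ _ := by
            apply mul_le_mul_of_nonneg_right _ (by positivity)
            exact_mod_cast card_projR_le S N hN U
    calc _ ≤ (c * (d : ℝ) ^ p.toReal) ^ (1 / p.toReal) := by
          apply Real.rpow_le_rpow _ h1 (by positivity)
          exact Finset.sum_nonneg fun u _ => by positivity
      _ = (c : ℝ) ^ (1 / p.toReal) * d := by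
          rw [Real.mul_rpow (by positivity) (by positivity), ← Real.rpow_mul (by positivity),
            mul_one_div_cancel hq.ne', Real.rpow_one]
      _ ≤ (2 ^ (∑ i, stepFn (S i) U * α i)) ^ (1 / p.toReal) *
          2 ^ (∑ i, (stepFn (S i) (U ∪ V) - stepFn (S i) U) * α i) := by
          gcongr
      _ = _ := by
          rw [← Real.rpow_mul (by norm_num), Real.rpow_add (by norm_num), mul_comm (1 / p.toReal)]

/-- **tightness for simple statistics.** If all statistics are simple and are
guarded by atoms of a full conjunctive query `Q`, and the polymatroid bound
`L = Log-U-Bound_{Γ_n}(Σ, b)` is finite, then there is a worst-case database instance `D`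
satisfying the concrete statistics `‖deg_{D (j i)}(V i|U i)‖_{p i} ≤ 2^{b i}` with
`|Q(D)| ≥ 2^{L - 2^n}`, where `n = |X|`. -/
theorem simple_polymatroid_bound_tight {X : Type*} [Fintype X] [DecidableEq X]
    (m : ℕ) (Y : Fin m → Finset X) (hcover : ∀ x : X, ∃ j, x ∈ Y j)
    (s : ℕ) (U V : Fin s → Finset X) (p : Fin s → ℝ≥0∞) (hp : ∀ i, 0 < p i)
    (hsimple : ∀ i, (U i).card ≤ 1)
    (j : Fin s → Fin m) (hguard : ∀ i, U i ∪ V i ⊆ Y (j i))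
    (b : Fin s → ℝ) (hb : ∀ i, 0 < b i)
    (L : ℝ) (hL : LogUBound (Gamma X) s U V p b = (L : EReal)) :
    ∃ (γ : Type) (_ : DecidableEq γ) (D : Fin m → Finset (X → γ)) (Q : Finset (X → γ)),
      (∀ i, lpNorm (U i) (V i) (D (j i)) (p i) ≤ 2 ^ (b i)) ∧
      (∀ t, t ∈ Q ↔ ∀ k : Fin m, ∃ t' ∈ D k, ∀ x ∈ Y k, t x = t' x) ∧
      (2 : ℝ) ^ (L - 2 ^ (Fintype.card X)) ≤ (Q.card : ℝ) := by
  classical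
  let k := Fintype.card {W : Finset X // W.Nonempty}
  let e : Fin k ≃ {W : Finset X // W.Nonempty} := (Fintype.equivFin _).symm
  let S : Fin k → Finset X := fun i => (e i).1
  have hS : ∀ i, (S i).Nonempty := fun i => (e i).2
  have hk : (k : ℝ) = 2 ^ (Fintype.card X) - 1 := by
    have h1 : k + 1 = 2 ^ (Fintype.card X) := by
      have h2 : k = (Finset.univ.filter fun W : Finset X => W.Nonempty).card :=
        Fintype.card_subtype _
      have h3 : (Finset.univ.filter fun W : Finset X => W.Nonempty) = Finset.univ.erase ∅ := by
        ext W; simp [Finset.nonempty_iff_ne_empty]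
      rw [h2, h3, Finset.card_erase_add_one (Finset.mem_univ _), Finset.card_univ,
        Fintype.card_finset]
    have : ((k + 1 : ℕ) : ℝ) = ((2 ^ (Fintype.card X) : ℕ) : ℝ) := by rw [h1]
    push_cast at this
    linarith
  obtain ⟨α, ha, hfeas, hbig⟩ : ∃ α : Fin k → ℝ, (∀ i, 0 ≤ α i) ∧
      (∀ l, ∑ i, statVal (stepFn (S i)) (U l) (V l) (p l) * α i < b l) ∧
      L - 1 < ∑ i, α i := by
    by_contra hno
    push Not at hno
    obtain ⟨w, hw, hv, hwb⟩ := lp_dual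
      (fun l i => statVal (stepFn (S i)) (U l) (V l) (p l)) b hb (L - 1) hno
    have h1 : (L : EReal) ≤ ((∑ i, w i * b i : ℝ) : EReal) := by
      rw [← hL]
      apply sInf_le
      refine ⟨w, hw, fun h hh => ?_, rfl⟩
      refine valid_of_step s U V p hsimple w hw (fun W hW => ?_) h hh
      have := hv (e.symm ⟨W, hW⟩)
      simpa [S] using this
    have h2 := EReal.coe_le_coe_iff.1 h1
    linarith
  let N : Fin k → ℕ := fun i => ⌊(2 : ℝ) ^ α i⌋₊
  have h1le : ∀ i, (1 : ℝ) ≤ 2 ^ α i := fun i => Real.one_le_rpow (by norm_num) (ha i)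
  have hN : ∀ i, 1 ≤ N i := fun i => Nat.le_floor (by simpa using h1le i)
  have hNa : ∀ i, (N i : ℝ) ≤ 2 ^ α i := fun i => Nat.floor_le (by positivity)
  have hNl : ∀ i, (2 : ℝ) ^ (α i - 1) ≤ N i := fun i => by
    have h1 : (2 : ℝ) ^ α i < N i + 1 := Nat.lt_floor_add_one _
    have h2 : (1 : ℝ) ≤ N i := by exact_mod_cast hN i
    rw [Real.rpow_sub (by norm_num), Real.rpow_one]
    linarith
  let T := tups S N
  let B : X → Finset (Fin k → ℕ) := fun x => T.image fun t => t x
  let Q : Finset (X → (Fin k → ℕ)) := (Fintype.piFinset B).filter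
    fun t => ∀ k : Fin m, ∃ t' ∈ T, ∀ x ∈ Y k, t x = t' x
  have hQ : ∀ t, t ∈ Q ↔ ∀ k : Fin m, ∃ t' ∈ T, ∀ x ∈ Y k, t x = t' x := by
    intro t
    simp only [Q, Finset.mem_filter, Fintype.mem_piFinset, and_iff_right_iff_imp]
    intro h x
    obtain ⟨l, hl⟩ := hcover x
    obtain ⟨t', ht', hx⟩ := h l
    exact Finset.mem_image.2 ⟨t', ht', (hx x hl).symm⟩
  refine ⟨Fin k → ℕ, inferInstance, fun _ => T, Q, fun i => ?_, hQ, ?_⟩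
  · refine (lpNorm_tups_le S N hN α hNa (U i) (V i) (p i) (hp i)).trans ?_
    exact Real.rpow_le_rpow_of_exponent_le (by norm_num) (hfeas i).le
  · have hTQ : T ⊆ Q := fun t ht => (hQ t).2 fun _ => ⟨t, ht, fun _ _ => rfl⟩
    have h1 : (T.card : ℝ) ≤ Q.card := by exact_mod_cast Finset.card_le_card hTQ
    refine le_trans ?_ h1
    have h2 : (T.card : ℝ) = ∏ i, (N i : ℝ) := by
      rw [card_tups S hS N]; push_cast; rfl
    rw [h2]
    calc (2 : ℝ) ^ (L - 2 ^ (Fintype.card X)) ≤ 2 ^ (∑ i, (α i - 1)) := by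
          apply Real.rpow_le_rpow_of_exponent_le (by norm_num)
          rw [Finset.sum_sub_distrib]
          simp
          linarith
      _ = ∏ i, (2 : ℝ) ^ (α i - 1) := Real.rpow_sum_of_pos (by norm_num) _ _
      _ ≤ _ := Finset.prod_le_prod (fun i _ => by positivity) fun i _ => hNl i

end

end JoinBounds
end

section
/- Let R be a nonempty finite relation over an attribute set containing U ∪ V, let p ∈ (0, ∞), let B ≥ 1, and suppose ||deg_R(V|U)||_p ≤ B. Let N = |R|. Then R can be partitioned into at most ⌈2^p⌉·(⌊log₂ N⌋ + 1) pairwise disjoint relations R_1, R_2, … such that each part R_i strongly satisfies the statistics, i.e. there exists a real d > 0 with ||deg_{R_i}(V|U)||_∞ ≤ d and |Π_U(R_i)| ≤ B^p / d^p. -/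
open scoped BigOperators ENNReal

namespace JoinBounds

noncomputable section

variable {A α : Type*}

/-- The `ℓ_p`-norm of the degree sequence for a finite real exponent `p`. -/
def lpNormR {A α : Type*} [Fintype A] [DecidableEq A] [DecidableEq α]
    (U V : Finset A) (R : Finset (A → α)) (p : ℝ) : ℝ :=
  (∑ u ∈ projR U R, (deg U V R u : ℝ) ^ p) ^ (1 / p)

/-- The `ℓ_∞`-norm (maximum) of the degree sequence. -/
def lpNormInf {A α : Type*} [Fintype A] [DecidableEq A] [DecidableEq α]
    (U V : Finset A) (R : Finset (A → α)) : ℕ :=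
  (projR U R).sup fun u => deg U V R u

end

theorem split_finset {β : Type*} [DecidableEq β] (S : Finset β) (m : ℕ) (hm : 0 < m) :
    ∃ f : β → ℕ, (∀ x ∈ S, f x < m) ∧
      ∀ c, (S.filter fun x => f x = c).card ≤ (S.card - 1) / m + 1 := by
  classical
  set s := (S.card - 1) / m + 1 with hs
  have hs0 : 0 < s := Nat.succ_pos _
  let g : β → ℕ := fun x => if h : x ∈ S then (S.equivFin ⟨x, h⟩ : ℕ) else 0
  have hg : ∀ x ∈ S, g x < S.card := by
    intro x hx
    simp only [g, hx, dif_pos]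
    exact (S.equivFin ⟨x, hx⟩).2
  have hinj : ∀ x ∈ S, ∀ y ∈ S, g x = g y → x = y := by
    intro x hx y hy h
    simp only [g, hx, hy, dif_pos] at h
    have := S.equivFin.injective (Fin.ext h)
    simpa using this
  refine ⟨fun x => g x / s, ?_, ?_⟩
  · intro x hx
    have h1 := hg x hx
    rw [Nat.div_lt_iff_lt_mul hs0]
    have h2 := Nat.lt_mul_div_succ (S.card - 1) hm
    rw [← hs] at h2
    omega
  · intro c
    have : (S.filter fun x => g x / s = c).card ≤ (Finset.Ico (c * s) (c * s + s)).card := by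
      apply Finset.card_le_card_of_injOn g
      · intro x hx
        simp only [Finset.coe_filter, Set.mem_ofPred_eq] at hx
        simp only [Finset.coe_Ico, Set.mem_Ico]
        have h := hx.2
        have h1 := Nat.div_add_mod (g x) s
        have h2 := Nat.mod_lt (g x) hs0
        rw [h, Nat.mul_comm] at h1
        omega
      · intro x hx y hy h
        simp only [Finset.coe_filter, Set.mem_ofPred_eq] at hx hy
        exact hinj x hx.1 y hy.1 h
    simpa using this

theorem deg_mono {A α : Type*} [Fintype A] [DecidableEq A] [DecidableEq α]
    (U V : Finset A) {Q R : Finset (A → α)} (h : Q ⊆ R) (u : A → Option α) :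
    deg U V Q u ≤ deg U V R u := by
  unfold deg projR
  exact Finset.card_le_card (Finset.image_subset_image (Finset.filter_subset_filter _ h))

theorem deg_pos_of_mem {A α : Type*} [Fintype A] [DecidableEq A] [DecidableEq α]
    (U V : Finset A) {R : Finset (A → α)} {u : A → Option α} (h : u ∈ projR U R) :
    0 < deg U V R u := by
  unfold deg projR
  obtain ⟨t, ht, rfl⟩ := Finset.mem_image.1 h
  exact Finset.card_pos.2 ⟨proj V t, Finset.mem_image_of_mem _ (by simp [ht])⟩

theorem deg_le_card {A α : Type*} [Fintype A] [DecidableEq A] [DecidableEq α]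
    (U V : Finset A) (R : Finset (A → α)) (u : A → Option α) :
    deg U V R u ≤ R.card := by
  unfold deg projR
  exact Finset.card_image_le.trans (Finset.card_filter_le _ _)

/-- The counting estimate for one part of one dyadic bucket. -/
theorem bucket_bound {β : Type*} [DecidableEq β] (S T : Finset β) (w : β → ℕ) (p : ℝ) (hp : 0 < p)
    (j m : ℕ) (hm : (2 : ℝ) ^ p ≤ m)
    (hlo : ∀ x ∈ S, 2 ^ j ≤ w x) (u : β) (hu : u ∈ S) (hhi : w u ≤ 2 ^ (j + 1))
    (hT : T.card ≤ (S.card - 1) / m + 1) :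
    (T.card : ℝ) * (w u : ℝ) ^ p ≤ ∑ x ∈ S, (w x : ℝ) ^ p := by
  have h1 : ((S.card - 1 : ℕ) : ℝ) * ((2 : ℝ) ^ j) ^ p ≤ ∑ x ∈ S.erase u, (w x : ℝ) ^ p := by
    rw [← Finset.card_erase_of_mem hu, ← nsmul_eq_mul]
    apply Finset.card_nsmul_le_sum
    intro x hx
    apply Real.rpow_le_rpow (by positivity) _ hp.le
    exact_mod_cast hlo x (Finset.mem_of_mem_erase hx)
  rw [← Finset.add_sum_erase S _ hu]
  have h2 : (w u : ℝ) ^ p ≤ m * ((2 : ℝ) ^ j) ^ p := by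
    calc (w u : ℝ) ^ p ≤ ((2 : ℝ) * 2 ^ j) ^ p := by
          apply Real.rpow_le_rpow (by positivity) _ hp.le
          rw [← pow_succ']
          exact_mod_cast hhi
      _ = 2 ^ p * ((2 : ℝ) ^ j) ^ p := Real.mul_rpow (by positivity) (by positivity)
      _ ≤ _ := by gcongr
  have h3 : (T.card : ℝ) ≤ (((S.card - 1) / m : ℕ) : ℝ) + 1 := by exact_mod_cast hT
  have h4 : (((S.card - 1) / m : ℕ) : ℝ) * m ≤ ((S.card - 1 : ℕ) : ℝ) := by
    exact_mod_cast Nat.div_mul_le_self _ _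
  set q : ℝ := (((S.card - 1) / m : ℕ) : ℝ)
  have hq : 0 ≤ q := Nat.cast_nonneg _
  have hw : 0 ≤ (w u : ℝ) ^ p := by positivity
  calc (T.card : ℝ) * (w u : ℝ) ^ p ≤ (q + 1) * (w u : ℝ) ^ p := by gcongr
    _ = (w u : ℝ) ^ p + q * (w u : ℝ) ^ p := by ring
    _ ≤ (w u : ℝ) ^ p + q * (m * ((2 : ℝ) ^ j) ^ p) := by gcongr
    _ = (w u : ℝ) ^ p + (q * m) * ((2 : ℝ) ^ j) ^ p := by ring
    _ ≤ (w u : ℝ) ^ p + ((S.card - 1 : ℕ) : ℝ) * ((2 : ℝ) ^ j) ^ p := by gcongr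
    _ ≤ _ := by gcongr

/-- **partition lemma.** If `‖deg_R(V|U)‖_p ≤ B` (with `p ∈ (0,∞)`, `B ≥ 1`),
then `R` can be partitioned into at most `⌈2^p⌉·(⌊log₂ N⌋ + 1)` pairwise disjoint relations,
each of which strongly satisfies the statistics: there is `d > 0` with
`‖deg_{R_i}(V|U)‖_∞ ≤ d` and `|Π_U(R_i)| ≤ B^p / d^p`. -/
theorem partition_strongly_satisfies {A α : Type*} [Fintype A] [DecidableEq A] [DecidableEq α]
    (R : Finset (A → α)) (hR : R.Nonempty) (U V : Finset A)
    (p : ℝ) (hp : 0 < p) (B : ℝ) (hB : 1 ≤ B)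
    (hstat : lpNormR U V R p ≤ B) :
    ∃ (k : ℕ) (parts : Fin k → Finset (A → α)),
      k ≤ ⌈(2 : ℝ) ^ p⌉₊ * (Nat.log 2 R.card + 1) ∧
      (∀ i j, i ≠ j → Disjoint (parts i) (parts j)) ∧
      (∀ i, parts i ⊆ R) ∧
      (∀ t ∈ R, ∃ i, t ∈ parts i) ∧
      ∀ i, ∃ d : ℝ, 0 < d ∧ (lpNormInf U V (parts i) : ℝ) ≤ d ∧
        ((projR U (parts i)).card : ℝ) ≤ B ^ p / d ^ p := by
  classical
  set m := ⌈(2 : ℝ) ^ p⌉₊ with hmdef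
  have hm2 : (2 : ℝ) ^ p ≤ m := Nat.le_ceil _
  have hm : 0 < m := Nat.ceil_pos.2 (by positivity)
  have hsum : ∑ u ∈ projR U R, (deg U V R u : ℝ) ^ p ≤ B ^ p := by
    have h0 : 0 ≤ ∑ u ∈ projR U R, (deg U V R u : ℝ) ^ p :=
      Finset.sum_nonneg fun _ _ => by positivity
    have h1 := Real.rpow_le_rpow (Real.rpow_nonneg h0 _) hstat hp.le
    rwa [← Real.rpow_mul h0, one_div, inv_mul_cancel₀ hp.ne', Real.rpow_one] at h1
  let S : ℕ → Finset (A → Option α) := fun j =>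
    (projR U R).filter fun u => Nat.log 2 (deg U V R u) = j
  choose f hf1 hf2 using fun j => split_finset (S j) m hm
  let lg : (A → Option α) → ℕ := fun u => Nat.log 2 (deg U V R u)
  let cls : (A → Option α) → ℕ := fun u => m * lg u + f (lg u) u
  have hfl : ∀ u ∈ projR U R, f (lg u) u < m := fun u hu =>
    hf1 (lg u) u (Finset.mem_filter.2 ⟨hu, rfl⟩)
  have hmem : ∀ t ∈ R, proj U t ∈ projR U R := fun t ht => Finset.mem_image_of_mem _ ht
  refine ⟨m * (Nat.log 2 R.card + 1), fun i => R.filter fun t => cls (proj U t) = i, le_rfl,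
    ?_, fun i => Finset.filter_subset _ _, ?_, ?_⟩
  · intro i j hij
    rw [Finset.disjoint_left]
    intro t h1 h2
    exact hij (Fin.ext ((Finset.mem_filter.1 h1).2.symm.trans (Finset.mem_filter.1 h2).2))
  · intro t ht
    have h1 : lg (proj U t) ≤ Nat.log 2 R.card := Nat.log_mono_right (deg_le_card U V R _)
    have h2 := hfl _ (hmem t ht)
    have h3 : cls (proj U t) < m * (Nat.log 2 R.card + 1) := by
      have := Nat.mul_le_mul_left m h1
      simp only [cls, Nat.mul_add, Nat.mul_one]
      omega
    exact ⟨⟨_, h3⟩, by simp [ht]⟩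
  · intro i
    set Q := R.filter fun t => cls (proj U t) = i with hQ
    rcases Finset.eq_empty_or_nonempty (projR U Q) with hE | hE
    · refine ⟨1, one_pos, ?_, ?_⟩
      · have h0 : lpNormInf U V Q = 0 := by
          rw [lpNormInf, hE, Finset.sup_empty]
          rfl
        change ((lpNormInf U V Q : ℕ) : ℝ) ≤ 1
        rw [h0]
        norm_num
      · rw [hE]
        simp only [Finset.card_empty, Nat.cast_zero]
        positivity
    · obtain ⟨u, huQ, hmax⟩ := Finset.exists_max_image (projR U Q) (deg U V R) hE
      have hT : ∀ x ∈ projR U Q, x ∈ projR U R ∧ cls x = i := by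
        intro x hx
        obtain ⟨t, ht, rfl⟩ := Finset.mem_image.1 hx
        exact ⟨hmem t (Finset.mem_filter.1 ht).1, (Finset.mem_filter.1 ht).2⟩
      have hu := hT u huQ
      have hd : 0 < deg U V R u := deg_pos_of_mem U V hu.1
      have hT2 : projR U Q ⊆ (S (lg u)).filter fun x => f (lg u) x = f (lg u) u := by
        intro x hx
        have h1 := hT x hx
        have h2 : m * lg x + f (lg x) x = m * lg u + f (lg u) u := h1.2.trans hu.2.symm
        have h3 := hfl x h1.1
        have h4 := hfl u hu.1
        have h5 : lg x = lg u := by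
          have := congrArg (· / m) h2
          simpa [Nat.mul_add_div hm, Nat.div_eq_of_lt h3, Nat.div_eq_of_lt h4] using this
        rw [h5] at h2
        refine Finset.mem_filter.2 ⟨Finset.mem_filter.2 ⟨h1.1, h5⟩, by omega⟩
      have hcard := (Finset.card_le_card hT2).trans (hf2 (lg u) (f (lg u) u))
      have hb := bucket_bound (S (lg u)) (projR U Q) (deg U V R) p hp (lg u) m hm2
        (by
          intro x hx
          obtain ⟨hx1, hx2⟩ := Finset.mem_filter.1 hx
          rw [← hx2]
          exact Nat.pow_log_le_self 2 (deg_pos_of_mem U V hx1).ne')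
        u (Finset.mem_filter.2 ⟨hu.1, rfl⟩)
        (Nat.lt_pow_succ_log_self (by norm_num) _).le hcard
      have hd' : (0 : ℝ) < deg U V R u := by exact_mod_cast hd
      refine ⟨deg U V R u, hd', ?_, ?_⟩
      · have : lpNormInf U V Q ≤ deg U V R u :=
          Finset.sup_le fun x hx =>
            (deg_mono U V (Finset.filter_subset _ _) x).trans (hmax x hx)
        exact_mod_cast this
      · rw [le_div_iff₀ (Real.rpow_pos_of_pos hd' p)]
        refine hb.trans (le_trans ?_ hsum)
        exact Finset.sum_le_sum_of_subset_of_nonneg (Finset.filter_subset _ _)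
          fun _ _ _ => by positivity

end JoinBounds
end

section
/- Let n ≥ 3 and let p ≥ 2 be a real number. For every polymatroid h on the variable set {X_1, …, X_n}: (p−2)·h(X_1X_2) + (h(X_2) + 2·h(X_1|X_2)) + ∑_{i=2}^{n−2} (h(X_i) + (p−1)·h(X_{i+1}|X_i)) + (h(X_{n−1}) + p·h(X_n|X_{n−1})) ≥ p·h(X_1⋯X_n). -/
open scoped BigOperators

namespace JoinBounds

/-- A polymatroid on the variable set `X ⊆ ℕ` (a set function constrained only on
subsets of `X`). -/
def IsPolymatroidOn (X : Finset ℕ) (h : Finset ℕ → ℝ) : Prop :=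
  h ∅ = 0 ∧ (∀ U V : Finset ℕ, U ⊆ V → V ⊆ X → h U ≤ h V) ∧
    ∀ U V : Finset ℕ, U ⊆ X → V ⊆ X → h U + h V ≥ h (U ∪ V) + h (U ∩ V)

/-- Adding one more variable at the end of the path. -/
theorem chain_step (n : ℕ) (h : Finset ℕ → ℝ) (hpoly : IsPolymatroidOn (Finset.Icc 1 n) h)
    (m : ℕ) (hm : 1 ≤ m) (hmn : m + 1 ≤ n) :
    h (Finset.Icc 1 (m + 1)) ≤ h (Finset.Icc 1 m) + (h {m, m + 1} - h {m}) := by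
  have key := hpoly.2.2 (Finset.Icc 1 m) {m, m + 1}
    (by intro x hx; simp only [Finset.mem_Icc] at *; omega)
    (by intro x hx; simp only [Finset.mem_Icc, Finset.mem_insert, Finset.mem_singleton] at *; omega)
  have e1 : Finset.Icc 1 m ∪ {m, m + 1} = Finset.Icc 1 (m + 1) := by
    ext x
    simp only [Finset.mem_union, Finset.mem_Icc, Finset.mem_insert, Finset.mem_singleton]
    omega
  have e2 : Finset.Icc 1 m ∩ {m, m + 1} = {m} := by
    ext x
    simp only [Finset.mem_inter, Finset.mem_Icc, Finset.mem_insert, Finset.mem_singleton]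
    omega
  rw [e1, e2] at key
  linarith

theorem pair_le (n : ℕ) (h : Finset ℕ → ℝ) (hpoly : IsPolymatroidOn (Finset.Icc 1 n) h)
    (m : ℕ) (hm : 1 ≤ m) (hmn : m + 1 ≤ n) :
    h {m, m + 1} ≤ h {m} + h {m + 1} := by
  have key := hpoly.2.2 {m} {m + 1}
    (by intro x hx; simp only [Finset.mem_Icc, Finset.mem_singleton] at *; omega)
    (by intro x hx; simp only [Finset.mem_Icc, Finset.mem_singleton] at *; omega)
  have e1 : ({m} : Finset ℕ) ∪ {m + 1} = {m, m + 1} := by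
    ext x; simp
  have e2 : ({m} : Finset ℕ) ∩ {m + 1} = ∅ := by
    ext x; simp
  rw [e1, e2, hpoly.1] at key
  linarith

theorem initial_bound (n : ℕ) (p : ℝ) (hp : 2 ≤ p)
    (h : Finset ℕ → ℝ) (hpoly : IsPolymatroidOn (Finset.Icc 1 n) h) (k : ℕ) (hk : k + 2 ≤ n) :
    p * h (Finset.Icc 1 (k + 2)) ≤ p * h {1, 2} - h {2}
      + (∑ i ∈ Finset.Icc 2 (k + 1), (h {i} + (p - 1) * (h {i, i + 1} - h {i})))
      + h {k + 2} := by
  induction k with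
  | zero =>
    have e : Finset.Icc 1 2 = ({1, 2} : Finset ℕ) := by decide
    simp [e]
  | succ k ih =>
    have ih' := ih (by omega)
    have c := chain_step n h hpoly (k + 2) (by omega) (by omega)
    have d := pair_le n h hpoly (k + 2) (by omega) (by omega)
    have c' := mul_le_mul_of_nonneg_left c (by linarith : (0 : ℝ) ≤ p)
    rw [Finset.sum_Icc_succ_top (by omega : 2 ≤ k + 1 + 1)]
    simp only [show k + 1 + 2 = k + 2 + 1 by omega, show k + 1 + 1 = k + 2 by omega]
    linarith

/-- **path inequality.** For `n ≥ 3`, real `p ≥ 2`, and every polymatroid `h`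
on the variables `X_1, …, X_n` (encoded as `1, …, n : ℕ`):
`(p−2)·h(X_1X_2) + (h(X_2) + 2·h(X_1|X_2)) + ∑_{i=2}^{n−2} (h(X_i) + (p−1)·h(X_{i+1}|X_i))`
`+ (h(X_{n−1}) + p·h(X_n|X_{n−1})) ≥ p·h(X_1⋯X_n)`. -/
theorem path_inequality (n : ℕ) (hn : 3 ≤ n) (p : ℝ) (hp : 2 ≤ p)
    (h : Finset ℕ → ℝ) (hpoly : IsPolymatroidOn (Finset.Icc 1 n) h) :
    (p - 2) * h {1, 2} + (h {2} + 2 * (h {1, 2} - h {2}))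
      + (∑ i ∈ Finset.Icc 2 (n - 2), (h {i} + (p - 1) * (h {i, i + 1} - h {i})))
      + (h {n - 1} + p * (h {n - 1, n} - h {n - 1}))
      ≥ p * h (Finset.Icc 1 n) := by
  obtain ⟨k, rfl⟩ : ∃ k, n = k + 3 := ⟨n - 3, by omega⟩
  have b := initial_bound (k + 3) p hp h hpoly k (by omega)
  have c := chain_step (k + 3) h hpoly (k + 2) (by omega) (by omega)
  have c' := mul_le_mul_of_nonneg_left c (by linarith : (0 : ℝ) ≤ p)
  simp only [show k + 3 - 2 = k + 1 by omega, show k + 3 - 1 = k + 2 by omega,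
    show k + 2 + 1 = k + 3 by omega] at *
  linarith

end JoinBounds
end

section
/- Let p ≥ 1 and let q be an integer with 1 ≤ q ≤ p. For every polymatroid h on the variable set {X_0, X_1, …, X_p}: ∑_{i=0}^{p} (h(X_i) + q·h(X_{(i+1) mod (p+1)} | X_i)) ≥ (q+1)·h(X_0X_1⋯X_p). -/
open scoped BigOperators

namespace JoinBounds

lemma subadd_aux (n : ℕ) (h : Finset ℕ → ℝ) (hpoly : IsPolymatroidOn (Finset.range n) h)
    (k : ℕ) (hk : k ≤ n) : h (Finset.range k) ≤ ∑ i ∈ Finset.range k, h {i} := by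
  obtain ⟨h0, hm, hs⟩ := hpoly
  induction k with
  | zero => simp [h0]
  | succ k ih =>
    have ih := ih (by omega)
    have hR : Finset.range k ⊆ Finset.range n := Finset.range_subset_range.2 (by omega)
    have hK : ({k} : Finset ℕ) ⊆ Finset.range n := by
      simp only [Finset.singleton_subset_iff, Finset.mem_range]; omega
    have h1 := hs (Finset.range k) {k} hR hK
    have h2 := hm ∅ (Finset.range k ∩ {k}) (Finset.empty_subset _)
      (Finset.inter_subset_left.trans hR)
    have h3 : Finset.range k ∪ {k} = Finset.range (k + 1) := by
      rw [Finset.range_add_one, Finset.union_comm]; rfl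
    rw [h3] at h1
    rw [Finset.sum_range_succ]
    linarith

lemma chain_aux (n : ℕ) (hn : 0 < n) (h : Finset ℕ → ℝ)
    (hpoly : IsPolymatroidOn (Finset.range n) h) (i : ℕ) (k : ℕ) :
    h ((Finset.range (k + 1)).image (fun j => (i + j) % n)) ≤
      h {i % n} + ∑ j ∈ Finset.range k,
        (h {(i + j) % n, ((i + j) % n + 1) % n} - h {(i + j) % n}) := by
  obtain ⟨h0, hm, hs⟩ := hpoly
  have hlt : ∀ x, x % n < n := fun x => Nat.mod_lt _ hn
  induction k with
  | zero => simp
  | succ k ih =>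
    set S := (Finset.range (k + 1)).image (fun j => (i + j) % n) with hS
    have hSR : S ⊆ Finset.range n := by
      intro x hx
      simp only [hS, Finset.mem_image] at hx
      obtain ⟨j, -, rfl⟩ := hx
      exact Finset.mem_range.2 (hlt _)
    have haS : (i + k) % n ∈ S :=
      Finset.mem_image.2 ⟨k, Finset.mem_range.2 (by omega), rfl⟩
    have hb : ((i + k) % n + 1) % n = (i + (k + 1)) % n := by
      rw [Nat.mod_add_mod, add_assoc]
    have hI : (Finset.range (k + 1 + 1)).image (fun j => (i + j) % n)
        = S ∪ {(i + k) % n, ((i + k) % n + 1) % n} := by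
      rw [Finset.range_add_one, Finset.image_insert, ← hS, hb]
      ext x
      simp only [Finset.mem_insert, Finset.mem_union, Finset.mem_singleton]
      constructor
      · tauto
      · rintro (hx | rfl | hx)
        · exact Or.inr hx
        · exact Or.inr haS
        · exact Or.inl hx
    have hV : ({(i + k) % n, ((i + k) % n + 1) % n} : Finset ℕ) ⊆ Finset.range n := by
      intro x hx
      simp only [Finset.mem_insert, Finset.mem_singleton] at hx
      rcases hx with rfl | rfl <;> exact Finset.mem_range.2 (hlt _)
    have h1 := hs S _ hSR hV
    have h2 := hm {(i + k) % n} (S ∩ {(i + k) % n, ((i + k) % n + 1) % n})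
      (by simp [haS]) (Finset.inter_subset_left.trans hSR)
    rw [hI, Finset.sum_range_succ]
    linarith

lemma image_aux (n i : ℕ) (hi : i < n) :
    (Finset.range n).image (fun j => (i + j) % n) = Finset.range n := by
  ext m
  simp only [Finset.mem_image, Finset.mem_range]
  constructor
  · rintro ⟨j, -, rfl⟩
    exact Nat.mod_lt _ (by omega)
  · intro hm
    refine ⟨(m + n - i) % n, Nat.mod_lt _ (by omega), ?_⟩
    rw [Nat.add_mod_mod, show i + (m + n - i) = m + n by omega, Nat.add_mod_right,
      Nat.mod_eq_of_lt hm]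

lemma rot_aux (n : ℕ) (f : ℕ → ℝ) (j : ℕ) :
    ∑ i ∈ Finset.range n, f ((i + j) % n) = ∑ i ∈ Finset.range n, f i := by
  induction j with
  | zero =>
    refine Finset.sum_congr rfl fun i hi => ?_
    rw [add_zero, Nat.mod_eq_of_lt (Finset.mem_range.1 hi)]
  | succ j ih =>
    rw [← ih]
    have h1 := Finset.sum_range_succ (fun i => f ((i + j) % n)) n
    have h2 := Finset.sum_range_succ' (fun i => f ((i + j) % n)) n
    have h3 : (n + j) % n = (0 + j) % n := by simp
    have h4 : ∑ i ∈ Finset.range n, f ((i + (j + 1)) % n)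
        = ∑ i ∈ Finset.range n, f ((i + 1 + j) % n) :=
      Finset.sum_congr rfl fun i _ => by rw [show i + (j + 1) = i + 1 + j by omega]
    simp only [h3] at h1
    linarith

/-- **cycle inequality.** For naturals `p ≥ 1` and `1 ≤ q ≤ p`, and every
polymatroid `h` on the variables `X_0, X_1, …, X_p` (encoded as `0, 1, …, p : ℕ`):
`∑_{i=0}^{p} (h(X_i) + q·h(X_{(i+1) mod (p+1)} | X_i)) ≥ (q+1)·h(X_0X_1⋯X_p)`. -/
theorem cycle_inequality (p q : ℕ) (hp : 1 ≤ p) (hq1 : 1 ≤ q) (hqp : q ≤ p)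
    (h : Finset ℕ → ℝ) (hpoly : IsPolymatroidOn (Finset.range (p + 1)) h) :
    (∑ i ∈ Finset.range (p + 1),
        (h {i} + (q : ℝ) * (h {i, (i + 1) % (p + 1)} - h {i})))
      ≥ ((q : ℝ) + 1) * h (Finset.range (p + 1)) := by
  set f : ℕ → ℝ := fun i => h {i, (i + 1) % (p + 1)} - h {i} with hf
  set H := h (Finset.range (p + 1)) with hH
  have hA := subadd_aux (p + 1) h hpoly (p + 1) le_rfl
  have hC : ∀ i ∈ Finset.range (p + 1),
      H ≤ h {i} + ∑ j ∈ Finset.range p, f ((i + j) % (p + 1)) := by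
    intro i hi
    have hi' := Finset.mem_range.1 hi
    have := chain_aux (p + 1) (by omega) h hpoly i p
    rwa [image_aux _ _ hi', Nat.mod_eq_of_lt hi'] at this
  have hD := Finset.sum_le_sum hC
  rw [Finset.sum_add_distrib, Finset.sum_comm,
    Finset.sum_congr rfl (fun j _ => rot_aux (p + 1) f j)] at hD
  simp only [Finset.sum_const, Finset.card_range, nsmul_eq_mul] at hD
  push_cast at hD
  have hE : (∑ i ∈ Finset.range (p + 1),
      (h {i} + (q : ℝ) * (h {i, (i + 1) % (p + 1)} - h {i})))
      = ∑ i ∈ Finset.range (p + 1), h {i} + q * ∑ i ∈ Finset.range (p + 1), f i := by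
    rw [Finset.sum_add_distrib, Finset.mul_sum]
  rw [hE]
  generalize ∑ i ∈ Finset.range (p + 1), h {i} = A at *
  generalize ∑ i ∈ Finset.range (p + 1), f i = B at *
  have hp' : (0 : ℝ) < p := by exact_mod_cast hp
  have hq' : (0 : ℝ) ≤ q := by positivity
  have hqp' : (q : ℝ) ≤ p := by exact_mod_cast hqp
  have e1 := mul_nonneg (sub_nonneg.2 hqp') (sub_nonneg.2 hA)
  have e2 := mul_nonneg hq' (sub_nonneg.2 hD)
  have e3 : 0 ≤ (p : ℝ) * (A + q * B - (q + 1) * H) := by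
    have : (p : ℝ) * (A + q * B - (q + 1) * H)
        = (p - q) * (A - H) + q * (A + p * B - (p + 1) * H) := by ring
    rw [this]; exact add_nonneg e1 e2
  have e4 := nonneg_of_mul_nonneg_right e3 hp'
  linarith

end JoinBounds
end

section
/- Let R and S be finite binary relations and let Q = {(x, y, z) : (x, y) ∈ R and (y, z) ∈ S} be their join. Let p, q > 0 be reals with 1/p + 1/q ≤ 1 (allowing p or q to be ∞ with 1/∞ = 0), and let M = min(|Π_Y(R)|, |Π_Y(S)|), where Π_Y denotes projection onto the join attribute (the second coordinate of R and the first coordinate of S). Then |Q| ≤ ||deg_R(X|Y)||_p · ||deg_S(Z|Y)||_q · M^{1 − 1/p − 1/q}. In particular, taking p = q = 2 gives |Q| ≤ ||deg_R(X|Y)||_2 · ||deg_S(Z|Y)||_2. -/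
open scoped BigOperators ENNReal

namespace JoinBounds

noncomputable section

variable {α β γ : Type*}

/-- Degree of the value `y` in the second coordinate of the binary relation `R`:
the number of distinct `x` with `(x, y) ∈ R`. -/
def degSnd [DecidableEq α] [DecidableEq β] (R : Finset (α × β)) (y : β) : ℕ :=
  (R.filter fun t => t.2 = y).card

/-- Degree of the value `y` in the first coordinate of the binary relation `S`:
the number of distinct `z` with `(y, z) ∈ S`. -/
def degFst [DecidableEq β] [DecidableEq γ] (S : Finset (β × γ)) (y : β) : ℕ :=
  (S.filter fun t => t.1 = y).card

/-- The `ℓ_p`-norm (`p ∈ (0,∞]`) of the degree sequence `deg_R(X|Y)` of a binary relation `R`,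
conditioned on the second coordinate. -/
def lpSnd [DecidableEq α] [DecidableEq β] (R : Finset (α × β)) (p : ℝ≥0∞) : ℝ :=
  if p = ⊤ then (((R.image Prod.snd).sup fun y => degSnd R y : ℕ) : ℝ)
  else (∑ y ∈ R.image Prod.snd, (degSnd R y : ℝ) ^ p.toReal) ^ (1 / p.toReal)

/-- The `ℓ_p`-norm (`p ∈ (0,∞]`) of the degree sequence `deg_S(Z|Y)` of a binary relation `S`,
conditioned on the first coordinate. -/
def lpFst [DecidableEq β] [DecidableEq γ] (S : Finset (β × γ)) (p : ℝ≥0∞) : ℝ :=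
  if p = ⊤ then (((S.image Prod.fst).sup fun y => degFst S y : ℕ) : ℝ)
  else (∑ y ∈ S.image Prod.fst, (degFst S y : ℝ) ^ p.toReal) ^ (1 / p.toReal)

/-- The join `Q = {(x, y, z) : (x, y) ∈ R ∧ (y, z) ∈ S}`. -/
def join [DecidableEq α] [DecidableEq β] [DecidableEq γ]
    (R : Finset (α × β)) (S : Finset (β × γ)) : Finset (α × β × γ) :=
  ((R ×ˢ S).filter fun t => t.1.2 = t.2.1).image fun t => (t.1.1, t.1.2, t.2.2)

end

/-- Normalisation: every bounded degree sequence is dominated by `A * u ^ (1/p)` with `∑ u ≤ 1`. -/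
lemma exists_weights {β : Type*} (I T : Finset β) (hT : T ⊆ I) (f : β → ℕ) (p : ℝ≥0∞)
    (hp : 0 < p) :
    ∃ (A : ℝ) (u : β → ℝ), A = (if p = ⊤ then ((I.sup f : ℕ) : ℝ)
      else (∑ y ∈ I, (f y : ℝ) ^ p.toReal) ^ (1 / p.toReal)) ∧ 0 ≤ A ∧ (∀ y, 0 ≤ u y) ∧
      ∑ y ∈ T, u y ≤ 1 ∧ ∀ y ∈ T, (f y : ℝ) ≤ A * u y ^ (1 / p).toReal := by
  by_cases h : p = ⊤
  · refine ⟨_, fun _ => 0, rfl, ?_, fun _ => le_rfl, by simp, ?_⟩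
    · simp [h]
    · intro y hy
      have : f y ≤ I.sup f := Finset.le_sup (hT hy)
      simpa [h] using this
  · have hr : 0 < p.toReal := ENNReal.toReal_pos hp.ne' h
    set N := ∑ y ∈ I, (f y : ℝ) ^ p.toReal with hN
    have hN0 : 0 ≤ N := Finset.sum_nonneg fun y _ => by positivity
    refine ⟨_, fun y => (f y : ℝ) ^ p.toReal / N, rfl, ?_, fun y => by positivity, ?_, ?_⟩
    · rw [if_neg h]; positivity
    · rw [← Finset.sum_div]
      apply div_le_one_of_le₀ _ hN0
      exact Finset.sum_le_sum_of_subset_of_nonneg hT fun y _ _ => by positivity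
    · intro y hy
      have hle : (f y : ℝ) ^ p.toReal ≤ N :=
        Finset.single_le_sum (f := fun y => (f y : ℝ) ^ p.toReal)
          (fun y _ => by positivity) (hT hy)
      have e : (1 / p).toReal = 1 / p.toReal := by simp
      rw [if_neg h, e]
      rcases hN0.eq_or_lt with h0 | h0
      · have hf : (f y : ℝ) = 0 := by
          by_contra hne
          have : 0 < (f y : ℝ) := lt_of_le_of_ne (by positivity) (Ne.symm hne)
          have := Real.rpow_pos_of_pos this p.toReal
          linarith
        rw [hf]
        positivity
      · rw [← Real.mul_rpow hN0 (by positivity), mul_div_cancel₀ _ h0.ne', one_div,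
          Real.rpow_rpow_inv (by positivity) hr.ne']

lemma card_join_le {α β γ : Type*} [DecidableEq α] [DecidableEq β] [DecidableEq γ]
    (R : Finset (α × β)) (S : Finset (β × γ)) :
    (join R S).card ≤ ∑ y ∈ R.image Prod.snd ∩ S.image Prod.fst, degSnd R y * degFst S y := by
  unfold join
  refine Finset.card_image_le.trans ?_
  rw [Finset.card_eq_sum_card_fiberwise (f := fun t : (α × β) × (β × γ) => t.1.2)
    (t := R.image Prod.snd ∩ S.image Prod.fst)]
  · refine Finset.sum_le_sum fun y _ => ?_
    unfold degSnd degFst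
    rw [← Finset.card_product]
    apply Finset.card_le_card
    intro t
    simp only [Finset.mem_filter, Finset.mem_product]
    rintro ⟨⟨⟨h1, h2⟩, h3⟩, h4⟩
    exact ⟨⟨h1, h4⟩, h2, h3 ▸ h4⟩
  · intro t ht
    simp only [Finset.coe_filter, Finset.mem_product, Set.mem_ofPred_eq] at ht
    obtain ⟨⟨h1, h2⟩, h3⟩ := ht
    simp only [Finset.coe_inter, Set.mem_inter_iff, Finset.mem_coe]
    exact ⟨Finset.mem_image_of_mem _ h1, Finset.mem_image.2 ⟨_, h2, h3.symm⟩⟩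

lemma join_bound_aux {α β γ : Type*} [DecidableEq α] [DecidableEq β] [DecidableEq γ]
    (R : Finset (α × β)) (S : Finset (β × γ))
    (p q : ℝ≥0∞) (hp : 0 < p) (hq : 0 < q) (hpq : 1 / p + 1 / q ≤ 1) :
    ((join R S).card : ℝ)
        ≤ lpSnd R p * lpFst S q *
          ((min (R.image Prod.snd).card (S.image Prod.fst).card : ℝ)
            ^ (1 - (1 / p).toReal - (1 / q).toReal)) := by
  set T := R.image Prod.snd ∩ S.image Prod.fst with hT
  obtain ⟨A, u, hA, hA0, hu0, hu1, hu⟩ :=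
    exists_weights (R.image Prod.snd) T Finset.inter_subset_left (degSnd R) p hp
  obtain ⟨B, v, hB, hB0, hv0, hv1, hv⟩ :=
    exists_weights (S.image Prod.fst) T Finset.inter_subset_right (degFst S) q hq
  have eA : lpSnd R p = A := hA.symm
  have eB : lpFst S q = B := hB.symm
  rw [eA, eB]
  have hst : (1 / p).toReal + (1 / q).toReal ≤ 1 := by
    have h1 : 1 / p ≠ ⊤ := by simp [hp.ne']
    have h2 : 1 / q ≠ ⊤ := by simp [hq.ne']
    rw [← ENNReal.toReal_add h1 h2]
    exact ENNReal.toReal_le_of_le_ofReal zero_le_one (by simpa using hpq)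
  have hs0 : 0 ≤ (1 / p).toReal := ENNReal.toReal_nonneg
  have ht0 : 0 ≤ (1 / q).toReal := ENNReal.toReal_nonneg
  set s := (1 / p).toReal
  set t := (1 / q).toReal
  have hr0 : 0 ≤ 1 - s - t := by linarith
  have h1 : ((join R S).card : ℝ) ≤ ∑ y ∈ T, (degSnd R y : ℝ) * degFst S y := by
    exact_mod_cast card_join_le R S
  refine h1.trans ?_
  rcases T.eq_empty_or_nonempty with hE | hE
  · rw [hE, Finset.sum_empty]
    positivity
  have hm : (0 : ℝ) < T.card := by exact_mod_cast hE.card_pos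
  have hmM : (T.card : ℝ) ≤ min ((R.image Prod.snd).card : ℝ) (S.image Prod.fst).card :=
    le_min (by exact_mod_cast Finset.card_le_card Finset.inter_subset_left)
      (by exact_mod_cast Finset.card_le_card Finset.inter_subset_right)
  set m : ℝ := (T.card : ℝ) with hmdef
  have key : ∀ y ∈ T, (degSnd R y : ℝ) * degFst S y ≤
      A * B * m ^ (1 - s - t) * (s * u y + t * v y + (1 - s - t) * m⁻¹) := by
    intro y hy
    have am := Real.geom_mean_le_arith_mean3_weighted hs0 ht0 hr0 (hu0 y) (hv0 y)
      (inv_nonneg.2 hm.le) (by ring)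
    have hmm : m ^ (1 - s - t) * m⁻¹ ^ (1 - s - t) = 1 := by
      rw [← Real.mul_rpow hm.le (inv_nonneg.2 hm.le), mul_inv_cancel₀ hm.ne', Real.one_rpow]
    calc (degSnd R y : ℝ) * degFst S y ≤ (A * u y ^ s) * (B * v y ^ t) :=
          mul_le_mul (hu y hy) (hv y hy) (by positivity)
            (mul_nonneg hA0 (Real.rpow_nonneg (hu0 y) _))
      _ = A * B * m ^ (1 - s - t) * (u y ^ s * v y ^ t * m⁻¹ ^ (1 - s - t)) := by
          linear_combination (-(A * u y ^ s * (B * v y ^ t))) * hmm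
      _ ≤ _ := mul_le_mul_of_nonneg_left am (by positivity)
  refine (Finset.sum_le_sum key).trans ?_
  rw [← Finset.mul_sum, Finset.sum_add_distrib, Finset.sum_add_distrib, ← Finset.mul_sum,
    ← Finset.mul_sum, Finset.sum_const, nsmul_eq_mul]
  have hone : s * ∑ y ∈ T, u y + t * ∑ y ∈ T, v y + (T.card : ℝ) * ((1 - s - t) * m⁻¹) ≤ 1 := by
    have e : (T.card : ℝ) * ((1 - s - t) * m⁻¹) = 1 - s - t := by
      rw [← hmdef]; field_simp
    rw [e]
    nlinarith [mul_le_mul_of_nonneg_left hu1 hs0, mul_le_mul_of_nonneg_left hv1 ht0]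
  calc _ ≤ A * B * m ^ (1 - s - t) * 1 := mul_le_mul_of_nonneg_left hone (by positivity)
    _ ≤ _ := by
      rw [mul_one]
      exact mul_le_mul_of_nonneg_left (Real.rpow_le_rpow hm.le hmM hr0) (by positivity)

/-- **single join, Hölder-type bound.** For `p, q ∈ (0, ∞]` with
`1/p + 1/q ≤ 1` and `M = min(|Π_Y(R)|, |Π_Y(S)|)`,
`|Q| ≤ ‖deg_R(X|Y)‖_p · ‖deg_S(Z|Y)‖_q · M^{1 − 1/p − 1/q}`; in particular (`p = q = 2`)
`|Q| ≤ ‖deg_R(X|Y)‖_2 · ‖deg_S(Z|Y)‖_2`. -/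
theorem single_join_bound {α β γ : Type*} [DecidableEq α] [DecidableEq β] [DecidableEq γ]
    (R : Finset (α × β)) (S : Finset (β × γ))
    (p q : ℝ≥0∞) (hp : 0 < p) (hq : 0 < q) (hpq : 1 / p + 1 / q ≤ 1) :
    ((join R S).card : ℝ)
        ≤ lpSnd R p * lpFst S q *
          ((min (R.image Prod.snd).card (S.image Prod.fst).card : ℝ)
            ^ (1 - (1 / p).toReal - (1 / q).toReal)) ∧
    ((join R S).card : ℝ) ≤ lpSnd R 2 * lpFst S 2 := by
  refine ⟨join_bound_aux R S p q hp hq hpq, ?_⟩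
  have h := join_bound_aux R S 2 2 (by norm_num) (by norm_num)
    (by simp [ENNReal.inv_two_add_inv_two])
  have e : (1 : ℝ) - (1 / (2 : ℝ≥0∞)).toReal - (1 / (2 : ℝ≥0∞)).toReal = 0 := by
    simp; norm_num
  rwa [e, Real.rpow_zero, mul_one] at h

end JoinBounds
end
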